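/- arXiv:1706.00518 — 2 statements merged into one kernel-verified Lean document; each statement's English description precedes it below -/
import Mathlib

section
/- There exists a (unique) F-algebra homomorphism ι: □_q → ⊠_q that sends x_i ↦ x_{i,i+1} for all i ∈ ℤ/4ℤ, and it satisfies ρ_⊠ ∘ ι = ι ∘ ρ_□, where ρ_□ is the automorphism of □_q sending x_i ↦ x_{i+1} and ρ_⊠ is the automorphism of ⊠_q sending each generator x_{ij} ↦ x_{i+1,j+1}. -/
/-!
An algebra map out of `□_q` is the same thing as a cyclic family of four elements satisfying the
defining relations of `□_q`. The elements `x_{i,i+1}` of `⊠_q` form such a family: the `q`-Weyl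
relations are those of `⊠_q` at the pairs `(i, i+1)`, `(i+1, i+2)`, and the `q`-Serre relations are
those of `⊠_q` at the chains `i, i+1, i+2, i+3`. Both `ρ ∘ ι` and `ι ∘ ρ` send the generator `x_i`
to `x_{i+1,i+2}`, so they agree.
-/

noncomputable section

open FreeAlgebra

variable (F : Type) [Field F]

/-- The defining relations of the algebra `□_q` (Terwilliger), on the free algebra
with generators `x_i`, `i ∈ ℤ/4ℤ`. -/
inductive BoxRel (q : F) : FreeAlgebra F (ZMod 4) → FreeAlgebra F (ZMod 4) → Prop
  | rel1 (i : ZMod 4) : BoxRel q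
      (q • (ι F i * ι F (i + 1)) - q⁻¹ • (ι F (i + 1) * ι F i))
      ((q - q⁻¹) • (1 : FreeAlgebra F (ZMod 4)))
  | rel2 (i : ZMod 4) : BoxRel q
      (ι F i ^ 3 * ι F (i + 2) +
        ((q ^ 3 - (q⁻¹) ^ 3) / (q - q⁻¹)) • (ι F i * ι F (i + 2) * ι F i ^ 2))
      (((q ^ 3 - (q⁻¹) ^ 3) / (q - q⁻¹)) • (ι F i ^ 2 * ι F (i + 2) * ι F i) +
        ι F (i + 2) * ι F i ^ 3)

/-- The algebra `□_q`, presented by generators and relations. -/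
abbrev BoxQ (q : F) : Type := RingQuot (BoxRel F q)

/-- The generators `x_i` of `□_q`. -/
def bx (q : F) (i : ZMod 4) : BoxQ F q :=
  RingQuot.mkAlgHom F (BoxRel F q) (ι F i)

/-- Index set for the generators `x_{ij}` of the `q`-tetrahedron algebra:
pairs `(i,j)` of elements of `ℤ/4ℤ` with `j - i ∈ {1, 2}`. -/
def TIdx : Type := {p : ZMod 4 × ZMod 4 // p.2 - p.1 = 1 ∨ p.2 - p.1 = 2}

/-- The defining relations of the `q`-tetrahedron algebra `⊠_q`. -/
inductive TetRel (q : F) : FreeAlgebra F TIdx → FreeAlgebra F TIdx → Prop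
  | inv (i j : ZMod 4) (h : j - i = 2) (h' : i - j = 2) :
      TetRel q (ι F ⟨(i, j), Or.inr h⟩ * ι F ⟨(j, i), Or.inr h'⟩)
        (1 : FreeAlgebra F TIdx)
  | qrel (p r : TIdx) (hpr : p.val.2 = r.val.1)
      (hne : ¬(p.val.2 - p.val.1 = 2 ∧ r.val.2 - r.val.1 = 2)) :
      TetRel q (q • (ι F p * ι F r) - q⁻¹ • (ι F r * ι F p))
        ((q - q⁻¹) • (1 : FreeAlgebra F TIdx))
  | serre (h i j k : ZMod 4) (h1 : i - h = 1) (h2 : j - i = 1) (h3 : k - j = 1) :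
      TetRel q
        (ι F ⟨(h, i), Or.inl h1⟩ ^ 3 * ι F ⟨(j, k), Or.inl h3⟩ +
          ((q ^ 3 - (q⁻¹) ^ 3) / (q - q⁻¹)) •
            (ι F ⟨(h, i), Or.inl h1⟩ * ι F ⟨(j, k), Or.inl h3⟩ * ι F ⟨(h, i), Or.inl h1⟩ ^ 2))
        (((q ^ 3 - (q⁻¹) ^ 3) / (q - q⁻¹)) •
            (ι F ⟨(h, i), Or.inl h1⟩ ^ 2 * ι F ⟨(j, k), Or.inl h3⟩ * ι F ⟨(h, i), Or.inl h1⟩) +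
          ι F ⟨(j, k), Or.inl h3⟩ * ι F ⟨(h, i), Or.inl h1⟩ ^ 3)

/-- The `q`-tetrahedron algebra `⊠_q`. -/
abbrev TetQ (q : F) : Type := RingQuot (TetRel F q)

/-- The generators `x_{ij}` of `⊠_q`. -/
def tg (q : F) (p : TIdx) : TetQ F q :=
  RingQuot.mkAlgHom F (TetRel F q) (ι F p)

/-- Shifting a generator index: `(i,j) ↦ (i+1, j+1)`. -/
def tshift (p : TIdx) : TIdx :=
  ⟨(p.val.1 + 1, p.val.2 + 1), by
    have h : p.val.2 + 1 - (p.val.1 + 1) = p.val.2 - p.val.1 := by ring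
    rw [h]; exact p.prop⟩

/-- The generator `x_{i,i+1}` of `⊠_q`. -/
def tg01 (q : F) (i : ZMod 4) : TetQ F q :=
  tg F q ⟨(i, i + 1), Or.inl (by ring)⟩

section Relations

variable {F} {A : Type*} [Ring A] [Algebra F A]

/-- The `q`-Weyl relation `(q a b - q⁻¹ b a) / (q - q⁻¹) = 1` between two elements of an algebra,
with the denominator cleared as in `BoxRel` and `TetRel`. -/
def QWeyl (q : F) (a b : A) : Prop :=
  q • (a * b) - q⁻¹ • (b * a) = (q - q⁻¹) • (1 : A)

/-- The cubic `q`-Serre relation `a³b - [3]_q a²ba + [3]_q aba² - ba³ = 0` between two elements of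
an algebra, with the negative terms moved to the right as in `BoxRel` and `TetRel`. -/
def QSerre (q : F) (a b : A) : Prop :=
  a ^ 3 * b + ((q ^ 3 - q⁻¹ ^ 3) / (q - q⁻¹)) • (a * b * a ^ 2) =
    ((q ^ 3 - q⁻¹ ^ 3) / (q - q⁻¹)) • (a ^ 2 * b * a) + b * a ^ 3

/-- A family `x_i`, `i ∈ ℤ/4ℤ`, in an algebra is a *box family* if it satisfies the defining
relations of `□_q`; such families are the possible images of the generators of `□_q` under
algebra homomorphisms. -/
structure IsBoxFamily (q : F) (x : ZMod 4 → A) : Prop where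
  qWeyl (i : ZMod 4) : QWeyl q (x i) (x (i + 1))
  qSerre (i : ZMod 4) : QSerre q (x i) (x (i + 2))

end Relations

namespace BoxQ

variable {F} {q : F}

theorem algHom_ext {A : Type*} [Semiring A] [Algebra F A] {f g : BoxQ F q →ₐ[F] A}
    (h : ∀ i, f (bx F q i) = g (bx F q i)) : f = g :=
  RingQuot.ringQuot_ext' _ f g (FreeAlgebra.hom_ext (funext h))

theorem comp_eq_comp_of_rotate {A B : Type*} [Semiring A] [Algebra F A] [Semiring B] [Algebra F B]
    {f : BoxQ F q →ₐ[F] A} {g : BoxQ F q →ₐ[F] B} {σ : A →ₐ[F] B} {ρ : BoxQ F q →ₐ[F] BoxQ F q}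
    (hρ : ∀ i, ρ (bx F q i) = bx F q (i + 1))
    (hσ : ∀ i, σ (f (bx F q i)) = g (bx F q (i + 1))) : σ.comp f = g.comp ρ :=
  algHom_ext fun i => (hσ i).trans (congrArg g (hρ i)).symm

variable {A : Type*} [Ring A] [Algebra F A] {x : ZMod 4 → A}

theorem lift_eq_of_boxRel (hx : IsBoxFamily q x) {a b : FreeAlgebra F (ZMod 4)}
    (h : BoxRel F q a b) : FreeAlgebra.lift F x a = FreeAlgebra.lift F x b := by
  cases h with
  | rel1 i => simpa [QWeyl] using hx.qWeyl i
  | rel2 i => simpa [QSerre] using hx.qSerre i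

/-- The algebra homomorphism out of `□_q` sending the generators to a given box family. -/
def lift (hx : IsBoxFamily q x) : BoxQ F q →ₐ[F] A :=
  RingQuot.liftAlgHom F ⟨FreeAlgebra.lift F x, fun _ _ => lift_eq_of_boxRel hx⟩

theorem lift_bx (hx : IsBoxFamily q x) (i : ZMod 4) : lift hx (bx F q i) = x i := by
  simp [lift, bx]

theorem existsUnique_algHom (hx : IsBoxFamily q x) :
    ∃! f : BoxQ F q →ₐ[F] A, ∀ i, f (bx F q i) = x i :=
  ⟨lift hx, lift_bx hx, fun _ hg => algHom_ext fun i => (hg i).trans (lift_bx hx i).symm⟩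

end BoxQ

namespace TetQ

variable {F} (q : F)

theorem qWeyl_tg {p r : TIdx} (hpr : p.val.2 = r.val.1)
    (hne : ¬(p.val.2 - p.val.1 = 2 ∧ r.val.2 - r.val.1 = 2)) :
    QWeyl q (tg F q p) (tg F q r) := by
  simpa [QWeyl, tg] using RingQuot.mkAlgHom_rel F (TetRel.qrel (q := q) p r hpr hne)

theorem qWeyl_tg01 (i : ZMod 4) : QWeyl q (tg01 F q i) (tg01 F q (i + 1)) := by
  refine qWeyl_tg q rfl fun h => ?_
  have one_eq_two : (1 : ZMod 4) = 2 := (add_sub_cancel_left i 1).symm.trans h.1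
  exact absurd one_eq_two (by decide)

theorem qSerre_tg01 (i : ZMod 4) : QSerre q (tg01 F q i) (tg01 F q (i + 2)) := by
  have serre := TetRel.serre (q := q) i (i + 1) (i + 2) (i + 2 + 1) (by ring) (by ring) (by ring)
  simpa [QSerre, tg01, tg] using RingQuot.mkAlgHom_rel F serre

theorem isBoxFamily_tg01 : IsBoxFamily q (tg01 F q) :=
  ⟨qWeyl_tg01 q, qSerre_tg01 q⟩

theorem map_tg01_of_rotate {q : F} {ρ : TetQ F q → TetQ F q}
    (hρ : ∀ p, ρ (tg F q p) = tg F q (tshift p)) (i : ZMod 4) :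
    ρ (tg01 F q i) = tg01 F q (i + 1) :=
  hρ _

end TetQ

theorem stmt18_general (q : F) (_hq0 : q ≠ 0) (_hq2 : q ^ 2 ≠ 1) :
    (∃! f : BoxQ F q →ₐ[F] TetQ F q, ∀ i : ZMod 4, f (bx F q i) = tg01 F q i) ∧
    (∀ f : BoxQ F q →ₐ[F] TetQ F q, (∀ i : ZMod 4, f (bx F q i) = tg01 F q i) →
      ∀ ρB : BoxQ F q ≃ₐ[F] BoxQ F q, (∀ i : ZMod 4, ρB (bx F q i) = bx F q (i + 1)) →
      ∀ ρT : TetQ F q ≃ₐ[F] TetQ F q, (∀ p : TIdx, ρT (tg F q p) = tg F q (tshift p)) →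
      ∀ a : BoxQ F q, ρT (f a) = f (ρB a)) := by
  refine ⟨BoxQ.existsUnique_algHom (TetQ.isBoxFamily_tg01 q), fun f hf ρB hB ρT hT => ?_⟩
  have rotate_image (i : ZMod 4) : ρT (f (bx F q i)) = f (bx F q (i + 1)) := by
    rw [hf, hf, TetQ.map_tg01_of_rotate hT]
  have comp_eq : (ρT : TetQ F q →ₐ[F] TetQ F q).comp f = f.comp ρB :=
    BoxQ.comp_eq_comp_of_rotate hB rotate_image
  exact DFunLike.congr_fun comp_eq

/-- There is a unique algebra homomorphism `□_q → ⊠_q` with `x_i ↦ x_{i,i+1}`, and it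
intertwines the rotation automorphisms `ρ` of `□_q` and of `⊠_q`. -/
theorem stmt18 [IsAlgClosed F] [CharZero F] (q : F) (hq0 : q ≠ 0)
    (hq1 : ∀ n : ℕ, 0 < n → q ^ n ≠ 1) :
    (∃! f : BoxQ F q →ₐ[F] TetQ F q, ∀ i : ZMod 4, f (bx F q i) = tg01 F q i) ∧
    (∀ f : BoxQ F q →ₐ[F] TetQ F q, (∀ i : ZMod 4, f (bx F q i) = tg01 F q i) →
      ∀ ρB : BoxQ F q ≃ₐ[F] BoxQ F q, (∀ i : ZMod 4, ρB (bx F q i) = bx F q (i + 1)) →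
      ∀ ρT : TetQ F q ≃ₐ[F] TetQ F q, (∀ p : TIdx, ρT (tg F q p) = tg F q (tshift p)) →
      ∀ a : BoxQ F q, ρT (f a) = f (ρB a)) :=
  stmt18_general F q hq0 (hq1 2 two_pos)
end
end

section
/- Let V be a finite-dimensional irreducible ⊠_q-module of type 1, and let ^{ρ²}V denote V twisted via ρ², where ρ is the automorphism of ⊠_q sending each generator x_{ij} ↦ x_{i+1,j+1}. Then V and ^{ρ²}V are isomorphic as ⊠_q-modules; that is, there exists an F-linear bijection σ: V → V such that σ(x_{ij}·v) = x_{i+2,j+2}·σ(v) for all generators x_{ij} of ⊠_q and all v ∈ V. -/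
/-!
Write `A = x₀₁` and `B = x₂₃`. The `q`-Serre relation confines the weights of conjugation by `A` on
`B ^ n` to `-n, …, n`, and Lagrange interpolation turns this into relations between words in `A` and
`B`. For the projection `e` onto the lowest eigenspace of `A` they show that the corner generated by
the words `e w e` is generated by the commuting elements `e B ^ n e`. Applying the same to the pairs
`(A, op A)`, `(B, op B)` in the product of the algebra with its opposite gives `e w* e = e w e`,
where `w*` is the reversed word.

The `q`-Weyl relations attach a flag to each vertex of the square `ℤ/4ℤ`, and the eigenspaces of
`x_{ij}` are intersections of members of the flags of `i` and `j`. Therefore `A` and `B` determine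
all the other generators, and an irreducible module `V` is generated by any lowest eigenvector `v`
of `A` under `A` and `B` alone. It follows that `w v ↦ ε (e w* ·)` is a well-defined isomorphism
from `V` to its dual, with the generators permuted by the reflection that fixes `x₀₁` and `x₂₃`.
The reflections for `V` and for the twist of `V` by `ρ` differ by `ρ²`.
-/

noncomputable section

open FreeAlgebra

variable (F : Type) [Field F]

/-- `f` acts semisimply: `V` is spanned by the eigenspaces of `f`. -/
def SemisimpleOn {V : Type} [AddCommGroup V] [Module F V] (f : Module.End F V) : Prop :=
  (⨆ θ : F, Module.End.eigenspace f θ) = ⊤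

/-- The set of (distinct) eigenvalues of `f`. -/
def EigSet {V : Type} [AddCommGroup V] [Module F V] (f : Module.End F V) : Set F :=
  {θ : F | Module.End.eigenspace f θ ≠ ⊥}

/-- The representation `π` of `A` on `V` is irreducible. -/
def IsIrrep {A V : Type} [Ring A] [Algebra F A] [AddCommGroup V] [Module F V]
    (π : A →ₐ[F] Module.End F V) : Prop :=
  Nontrivial V ∧ ∀ W : Submodule F V, (∀ a : A, ∀ v ∈ W, π a v ∈ W) → W = ⊥ ∨ W = ⊤

/-- Isomorphism of representations of `A`. -/
def RepIso {A V W : Type} [Ring A] [Algebra F A] [AddCommGroup V] [Module F V]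
    [AddCommGroup W] [Module F W]
    (π : A →ₐ[F] Module.End F V) (π' : A →ₐ[F] Module.End F W) : Prop :=
  ∃ σ : V ≃ₗ[F] W, ∀ (a : A) (v : V), σ (π a v) = π' a (σ v)

section Generic

open Finset Polynomial

variable {𝕜 : Type*} [Field 𝕜] {q : 𝕜}

/-- The integer powers of `q` are pairwise distinct, i.e. `q` is nonzero and not a root of unity:
the standing assumption on the deformation parameter. -/
def IsGeneric (q : 𝕜) : Prop := Function.Injective fun n : ℤ => q ^ n

theorem isGeneric_of_pow_ne_one (hq0 : q ≠ 0) (hq1 : ∀ n : ℕ, 0 < n → q ^ n ≠ 1) :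
    IsGeneric q := by
  have hfin : ¬IsOfFinOrder (Units.mk0 q hq0) := by
    rw [isOfFinOrder_iff_pow_eq_one]
    rintro ⟨n, hn, h⟩
    exact hq1 n hn (by simpa using congrArg Units.val h)
  intro a b hab
  exact injective_zpow_iff_not_isOfFinOrder.mpr hfin (Units.ext (by simpa using hab))

namespace IsGeneric

theorem zpow_eq_iff (hq : IsGeneric q) {a b : ℤ} : q ^ a = q ^ b ↔ a = b := hq.eq_iff

theorem ne_zero (hq : IsGeneric q) : q ≠ 0 := by
  rintro rfl
  exact absurd (hq.zpow_eq_iff.mp (by simp : (0 : 𝕜) ^ (1 : ℤ) = 0 ^ (2 : ℤ))) (by decide)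

theorem inv (hq : IsGeneric q) : IsGeneric q⁻¹ := fun a b h =>
  neg_injective (hq (by simpa only [inv_zpow'] using h))

theorem sub_inv_ne_zero (hq : IsGeneric q) : q - q⁻¹ ≠ 0 := fun h =>
  absurd (hq.zpow_eq_iff.mp (by simpa using sub_eq_zero.mp h : q ^ (1 : ℤ) = q ^ (-1 : ℤ)))
    (by decide)

theorem three_eq (hq : IsGeneric q) :
    (q ^ 3 - q⁻¹ ^ 3) / (q - q⁻¹) = q ^ 2 + 1 + q⁻¹ ^ 2 := by
  rw [div_eq_iff hq.sub_inv_ne_zero]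
  linear_combination (q - q⁻¹) * mul_inv_cancel₀ hq.ne_zero

variable {M : Type*} [AddCommGroup M] [Module 𝕜 M]

/-- Lagrange interpolation for Laurent polynomials with coefficients in a module: the value at any
`q ^ a` is a combination of the values at sufficiently many other powers of `q`. -/
theorem sum_zpow_smul_mem (hq : IsGeneric q) {S : Submodule 𝕜 M} {K : ℤ → M} {lo hi : ℤ}
    {T : Finset ℤ} (hT : hi - lo < #T)
    (hS : ∀ a ∈ T, ∑ k ∈ Icc lo hi, q ^ (a * k) • K k ∈ S) (a : ℤ) :
    ∑ k ∈ Icc lo hi, q ^ (a * k) • K k ∈ S := by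
  set L : ℤ → 𝕜 := fun s => (Lagrange.basis T (fun s => q ^ s) s).eval (q ^ a)
  have hmonomial : ∀ j : ℕ, j < #T → (q ^ a) ^ j = ∑ s ∈ T, (q ^ s) ^ j * L s := fun j hj => by
    have h := Lagrange.eq_interpolate (f := (X ^ j : 𝕜[X])) (v := fun s : ℤ => q ^ s)
      (s := T) hq.injOn (by rw [degree_X_pow]; exact_mod_cast hj)
    simpa [Lagrange.interpolate_apply, eval_finsetSum, L] using congrArg (eval (q ^ a)) h
  have hpow : ∀ k ∈ Icc lo hi,
      q ^ (a * k) = ∑ s ∈ T, L s * q ^ ((a - s) * lo) * q ^ (s * k) := fun k hk => by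
    obtain ⟨j, rfl⟩ : ∃ j : ℕ, k = lo + j := ⟨(k - lo).toNat, by grind⟩
    have hj := hmonomial j (by grind)
    calc q ^ (a * (lo + j)) = q ^ (a * lo) * (q ^ a) ^ j := by
          rw [← zpow_natCast, ← zpow_mul, ← zpow_add₀ hq.ne_zero, mul_add]
      _ = _ := by
          rw [hj, mul_sum]
          refine sum_congr rfl fun s _ => ?_
          have hexp : (a - s) * lo + s * (lo + j) = a * lo + s * j := by ring
          rw [mul_assoc, ← zpow_add₀ hq.ne_zero, hexp, zpow_add₀ hq.ne_zero, zpow_mul q s,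
            zpow_natCast]
          ring
  have hsum : ∑ k ∈ Icc lo hi, q ^ (a * k) • K k =
      ∑ s ∈ T, (L s * q ^ ((a - s) * lo)) • ∑ k ∈ Icc lo hi, q ^ (s * k) • K k := by
    simp_rw [smul_sum, smul_smul]
    rw [sum_comm]
    exact sum_congr rfl fun k hk => by rw [hpow k hk, sum_smul]
  rw [hsum]
  exact S.sum_mem fun s hs => S.smul_mem _ (hS s hs)

end IsGeneric

end Generic

section Spectral

open Finset Polynomial

variable {𝕜 : Type*} [Field 𝕜] {q : 𝕜} {d : ℕ}

/-- The `n`-th eigenvalue `q ^ (2 n - d)` of a type 1 operator of diameter `d`, in ascending order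
of exponents. The index runs over `ℤ`; the values for `n < 0` and `n > d` are not eigenvalues. -/
def qEigenvalue (q : 𝕜) (d : ℕ) (n : ℤ) : 𝕜 := q ^ (2 * n - d)

theorem qEigenvalue_ne_zero (hq : IsGeneric q) (n : ℤ) : qEigenvalue q d n ≠ 0 :=
  zpow_ne_zero _ hq.ne_zero

theorem qEigenvalue_injective (hq : IsGeneric q) : Function.Injective (qEigenvalue q d) :=
  fun a b h => by have := hq.zpow_eq_iff.mp h; omega

theorem qEigenvalue_natCast_injective (hq : IsGeneric q) :
    Function.Injective fun n : ℕ => qEigenvalue q d n :=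
  (qEigenvalue_injective hq).comp Nat.cast_injective

theorem qEigenvalue_inv (n : ℤ) : qEigenvalue q⁻¹ d n = qEigenvalue q d (d - n) := by
  rw [qEigenvalue, qEigenvalue, inv_zpow']
  congr 1
  ring

theorem inv_qEigenvalue (n : ℤ) : (qEigenvalue q d n)⁻¹ = qEigenvalue q⁻¹ d n :=
  (inv_zpow q _).symm

theorem qEigenvalue_add (hq : IsGeneric q) (n m : ℤ) :
    qEigenvalue q d (n + m) = q ^ (2 * m) * qEigenvalue q d n := by
  rw [qEigenvalue, qEigenvalue, ← zpow_add₀ hq.ne_zero]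
  congr 1
  ring

/-- The polynomial with simple roots `q ^ (-d), q ^ (2 - d), …, q ^ d`. It annihilates `x` exactly
when `x` is diagonalizable with eigenvalues among these roots. -/
def spectralPoly (q : 𝕜) (d : ℕ) : 𝕜[X] :=
  Lagrange.nodal (range (d + 1)) fun n : ℕ => qEigenvalue q d n

theorem spectralPoly_inv : spectralPoly q⁻¹ d = spectralPoly q d := by
  rw [spectralPoly, Lagrange.nodal, ← prod_range_reflect, spectralPoly, Lagrange.nodal]
  refine prod_congr rfl fun n hn => ?_
  have hn : n ≤ d := Nat.lt_succ_iff.mp (mem_range.mp hn)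
  rw [qEigenvalue_inv, show d + 1 - 1 - n = d - n by omega, Nat.cast_sub hn, sub_sub_cancel]

theorem eval_spectralPoly_ne_zero (hq : IsGeneric q) {n : ℤ} (hn : n ∉ Icc (0 : ℤ) d) :
    (spectralPoly q d).eval (qEigenvalue q d n) ≠ 0 := by
  refine Lagrange.eval_nodal_not_at_node fun m hm h => hn ?_
  rw [qEigenvalue_injective hq h]
  grind

end Spectral

section Eigenspaces

open Module Finset Polynomial

variable {𝕜 M : Type*} [Field 𝕜] [AddCommGroup M] [Module 𝕜 M]

theorem iSup_eigenspace_eq_ker_aeval_nodal {ι : Type*} (f : End 𝕜 M) {t : ι → 𝕜}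
    (ht : Function.Injective t) (s : Finset ι) :
    ⨆ i ∈ s, f.eigenspace (t i) = LinearMap.ker (aeval f (Lagrange.nodal s t)) := by
  classical
  induction s using Finset.induction with
  | empty => simp [End.one_eq_id]
  | insert i s hi ih =>
    have hcop : IsCoprime (X - C (t i)) (Lagrange.nodal s t) :=
      IsCoprime.prod_right fun j hj => isCoprime_X_sub_C_of_isUnit_sub
        (sub_ne_zero.mpr (ht.ne (ne_of_mem_of_not_mem hj hi).symm)).isUnit
    rw [Finset.iSup_insert, ih, Lagrange.nodal_insert_eq_nodal hi,
      ← sup_ker_aeval_eq_ker_aeval_mul_of_coprime f hcop, End.eigenspace_def, map_sub, aeval_X,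
      aeval_C, Algebra.algebraMap_eq_smul_one]

end Eigenspaces

section Idempotent

open Finset Polynomial MulOpposite

variable {𝕜 R : Type*} [Field 𝕜] [Ring R] [Algebra 𝕜 R] {q : 𝕜} {d : ℕ} {A : R}

theorem isUnit_of_aeval_spectralPoly_eq_zero (hq : IsGeneric q)
    (hA : aeval A (spectralPoly q d) = 0) : IsUnit A := by
  have hcop : IsCoprime (X : 𝕜[X]) (spectralPoly q d) := by
    refine (irreducible_X.coprime_iff_not_dvd).mpr fun h => ?_
    rw [X_dvd_iff, coeff_zero_eq_eval_zero] at h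
    exact Lagrange.eval_nodal_not_at_node (s := range (d + 1))
      (fun n _ => (qEigenvalue_ne_zero hq n).symm) h
  obtain ⟨u, v, huv⟩ := hcop
  have h : aeval A u * A = 1 := by simpa [hA] using congrArg (aeval A) huv
  have h' : A * aeval A u = 1 := by
    simpa [hA] using congrArg (aeval A)
      ((mul_comm X u).symm ▸ huv : X * u + v * spectralPoly q d = 1)
  exact ⟨⟨A, aeval A u, h', h⟩, rfl⟩

theorem mul_aeval_of_mul_eq_smul {Y : R} {t : 𝕜} (h : Y * A = t • Y) (p : 𝕜[X]) :
    Y * aeval A p = p.eval t • Y := by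
  induction p using Polynomial.induction_on' with
  | add p r hp hr => rw [map_add, mul_add, hp, hr, eval_add, add_smul]
  | monomial n c =>
    have hpow : Y * A ^ n = t ^ n • Y := by
      induction n with
      | zero => simp
      | succ n ih => rw [pow_succ, ← mul_assoc, ih, smul_mul_assoc, h, smul_smul, pow_succ]
    rw [aeval_monomial, eval_monomial, Algebra.algebraMap_eq_smul_one, smul_mul_assoc, one_mul,
      mul_smul_comm, hpow, smul_smul]

/-- The idempotent of `A` projecting onto its lowest weight `q ^ (-d)`, as a polynomial in `A`. -/
def lowIdem (q : 𝕜) (d : ℕ) (A : R) : R :=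
  aeval A (Lagrange.basis (range (d + 1)) (fun n : ℕ => qEigenvalue q d n) 0)

theorem lowIdem_op : lowIdem q d (op A) = op (lowIdem q d A) := aeval_op_apply _ _

theorem mul_lowIdem_eq_self (hq : IsGeneric q) {Y : R} (h : Y * A = qEigenvalue q d 0 • Y) :
    Y * lowIdem q d A = Y := by
  have hself := Lagrange.eval_basis_self (qEigenvalue_natCast_injective (d := d) hq).injOn
    (mem_range.mpr d.succ_pos)
  rw [lowIdem, mul_aeval_of_mul_eq_smul h, ← Nat.cast_zero, hself, one_smul]

theorem mul_lowIdem_eq_zero {Y : R} {k : ℤ} (hk : k ∈ Icc (1 : ℤ) d)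
    (h : Y * A = qEigenvalue q d k • Y) : Y * lowIdem q d A = 0 := by
  obtain ⟨hk0, hkd⟩ := mem_Icc.mp hk
  lift k to ℕ using by omega
  have hzero := Lagrange.eval_basis_of_ne (v := fun n : ℕ => qEigenvalue q d n)
    (by omega : 0 ≠ k) (mem_range.mpr (by omega : k < d + 1))
  rw [lowIdem, mul_aeval_of_mul_eq_smul h, hzero, zero_smul]

theorem lowIdem_mul (hA : aeval A (spectralPoly q d) = 0) :
    lowIdem q d A * A = qEigenvalue q d 0 • lowIdem q d A := by
  have hdvd : spectralPoly q d ∣ Lagrange.basis (range (d + 1)) (fun n : ℕ => qEigenvalue q d n) 0 *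
      (X - C (qEigenvalue q d 0)) := by
    have h0 : 0 ∈ range (d + 1) := mem_range.mpr d.succ_pos
    rw [Lagrange.basis_eq_prod_sub_inv_mul_nodal_div h0, ← Lagrange.nodal_erase_eq_nodal_div h0,
      spectralPoly, Lagrange.nodal_eq_mul_nodal_erase h0, mul_assoc, Nat.cast_zero,
      mul_comm (X - _)]
    exact dvd_mul_left _ _
  obtain ⟨r, hr⟩ := hdvd
  rw [← sub_eq_zero, ← mul_one (lowIdem q d A), mul_assoc, one_mul, ← mul_smul_comm, ← mul_sub,
    ← Algebra.algebraMap_eq_smul_one, lowIdem]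
  simpa [hA] using congrArg (aeval A) hr

theorem lowIdem_mul_pow (hA : aeval A (spectralPoly q d) = 0) (t : ℕ) :
    lowIdem q d A * A ^ t = qEigenvalue q d 0 ^ t • lowIdem q d A := by
  simpa using mul_aeval_of_mul_eq_smul (lowIdem_mul hA) (X ^ t : 𝕜[X])

theorem commute_lowIdem : Commute A (lowIdem q d A) := by
  simpa only [lowIdem, aeval_X] using (Commute.all (X : 𝕜[X])
    (Lagrange.basis (range (d + 1)) (fun n : ℕ => qEigenvalue q d n) 0)).map (aeval A)

theorem pow_mul_lowIdem (hA : aeval A (spectralPoly q d) = 0) (t : ℕ) :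
    A ^ t * lowIdem q d A = qEigenvalue q d 0 ^ t • lowIdem q d A := by
  rw [(commute_lowIdem.pow_left t).eq, lowIdem_mul_pow hA]

end Idempotent

section WeightSpace

open Finset Polynomial

variable {𝕜 R : Type*} [Field 𝕜] [Ring R] [Algebra 𝕜 R] {q : 𝕜} {d : ℕ} {A B : R}

/-- The elements of weight `2 k` under conjugation by `A`: those `X` with `X A = q ^ (2 k) A X`. -/
def weightSpace (q : 𝕜) (A : R) (k : ℤ) : Submodule 𝕜 R :=
  LinearMap.eqLocus (LinearMap.mulRight 𝕜 A) (q ^ (2 * k) • LinearMap.mulLeft 𝕜 A)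

theorem mem_weightSpace {k : ℤ} {X : R} :
    X ∈ weightSpace q A k ↔ X * A = q ^ (2 * k) • (A * X) := Iff.rfl

theorem weightSpace_mul_le (hq : IsGeneric q) (k l : ℤ) :
    weightSpace q A k * weightSpace q A l ≤ weightSpace q A (k + l) :=
  Submodule.mul_le.mpr fun X hX Y hY => by
    rw [mem_weightSpace] at *
    rw [mul_assoc, hY, mul_smul_comm, ← mul_assoc, hX, smul_mul_assoc, smul_smul, mul_assoc,
      ← zpow_add₀ hq.ne_zero]
    ring_nf

theorem mul_pow_of_mem_weightSpace (hq : IsGeneric q) {k : ℤ} {X : R}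
    (hX : X ∈ weightSpace q A k) (t : ℕ) :
    X * A ^ t = q ^ (2 * k * t) • (A ^ t * X) := by
  rw [mem_weightSpace] at hX
  induction t with
  | zero => simp
  | succ t ih =>
    rw [pow_succ', ← mul_assoc, hX, smul_mul_assoc, mul_assoc, ih, mul_smul_comm, smul_smul,
      ← mul_assoc, ← zpow_add₀ hq.ne_zero]
    push_cast
    ring_nf

/-- The cubic `q`-Serre relation between `A` and `B`. -/
def IsQSerre (q : 𝕜) (A B : R) : Prop :=
  A ^ 3 * B + ((q ^ 3 - q⁻¹ ^ 3) / (q - q⁻¹)) • (A * B * A ^ 2) =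
    ((q ^ 3 - q⁻¹ ^ 3) / (q - q⁻¹)) • (A ^ 2 * B * A) + B * A ^ 3

theorem nodal_zpow_two_mul (hq : IsGeneric q) :
    Lagrange.nodal (Icc (-1 : ℤ) 1) (fun k => q ^ (2 * k)) =
      X ^ 3 - C ((q ^ 3 - q⁻¹ ^ 3) / (q - q⁻¹)) * X ^ 2 +
        C ((q ^ 3 - q⁻¹ ^ 3) / (q - q⁻¹)) * X - 1 := by
  have hIcc : Icc (-1 : ℤ) 1 = {-1, 0, 1} := rfl
  have hinv : (C q : 𝕜[X]) * C q⁻¹ = 1 := by rw [← C_mul, mul_inv_cancel₀ hq.ne_zero, C_1]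
  rw [hq.three_eq, hIcc, Lagrange.nodal, prod_insert (by decide), prod_insert (by decide),
    prod_singleton, mul_neg_one, mul_one, mul_zero, zpow_zero, zpow_neg, zpow_ofNat, ← inv_pow]
  simp only [C_add, C_pow, C_1]
  linear_combination (X - 1) * (C q * C q⁻¹ + 1) * hinv

theorem pow_mul_conj_pow (u : Rˣ) (B : R) (m n : ℕ) :
    (u : R) ^ (m + n) * (LinearMap.mulLeftRight 𝕜 (↑u⁻¹, ↑u) ^ n) B =
      (u : R) ^ m * B * (u : R) ^ n := by
  induction n generalizing m with
  | zero => simp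
  | succ n ih =>
    calc (u : R) ^ (m + (n + 1)) * (LinearMap.mulLeftRight 𝕜 (↑u⁻¹, ↑u) ^ (n + 1)) B
        = (u : R) ^ (m + n) * (u * ↑u⁻¹) * (LinearMap.mulLeftRight 𝕜 (↑u⁻¹, ↑u) ^ n) B * u := by
          rw [pow_succ' (LinearMap.mulLeftRight _ _), Module.End.mul_apply,
            LinearMap.mulLeftRight_apply]
          simp only [pow_succ, ← add_assoc, mul_assoc]
      _ = (u : R) ^ m * B * (u : R) ^ (n + 1) := by
          rw [u.mul_inv, mul_one, ih, mul_assoc, ← pow_succ]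

/-- For invertible `A` the `q`-Serre relation says that conjugation by `A` satisfies
`(φ - q⁻²) (φ - 1) (φ - q²) = 0` on `B`. -/
theorem IsQSerre.mem_iSup_weightSpace (h : IsQSerre q A B) (hq : IsGeneric q) (hA : IsUnit A) :
    B ∈ ⨆ k ∈ Icc (-1 : ℤ) 1, weightSpace q A k := by
  obtain ⟨u, rfl⟩ := hA
  set φ : Module.End 𝕜 R := LinearMap.mulLeftRight 𝕜 (↑u⁻¹, ↑u)
  have hinj : Function.Injective fun k : ℤ => q ^ (2 * k) := fun k l hkl => by
    have := hq.zpow_eq_iff.mp hkl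
    omega
  have hspace : ∀ k : ℤ, φ.eigenspace (q ^ (2 * k)) ≤ weightSpace q (u : R) k := fun k X hX => by
    have hX : ↑u⁻¹ * X * u = q ^ (2 * k) • X := Module.End.mem_eigenspace_iff.mp hX
    rw [mem_weightSpace, ← mul_smul_comm, ← hX, ← mul_assoc, ← mul_assoc, u.mul_inv, one_mul]
  have hker : aeval φ (Lagrange.nodal (Icc (-1 : ℤ) 1) fun k => q ^ (2 * k)) B = 0 := by
    have hφ : ∀ m n : ℕ, (u : R) ^ (m + n) * (φ ^ n) B = (u : R) ^ m * B * (u : R) ^ n :=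
      pow_mul_conj_pow u B
    refine (u.isUnit.pow 3).mul_left_cancel ?_
    have h1 : (u : R) ^ 3 * φ B = (u : R) ^ 2 * B * u := by
      simpa only [pow_one] using hφ 2 1
    have h2 : (u : R) ^ 3 * (φ ^ 2) B = u * B * (u : R) ^ 2 := by
      simpa only [pow_one] using hφ 1 2
    have h3 : (u : R) ^ 3 * (φ ^ 3) B = B * (u : R) ^ 3 := by
      simpa only [pow_zero, one_mul] using hφ 0 3
    rw [nodal_zpow_two_mul hq]
    simp only [map_sub, map_add, map_mul, map_pow, aeval_X, aeval_C, map_one,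
      Algebra.algebraMap_eq_smul_one, smul_mul_assoc, one_mul, LinearMap.sub_apply,
      LinearMap.add_apply, LinearMap.smul_apply, Module.End.one_apply, mul_sub, mul_add,
      mul_smul_comm, h1, h2, h3]
    rw [mul_zero, ← sub_eq_zero.mpr h.symm]
    abel
  rw [← LinearMap.mem_ker, ← iSup_eigenspace_eq_ker_aeval_nodal φ hinj] at hker
  exact iSup₂_mono (fun k _ => hspace k) hker

theorem pow_mem_iSup_weightSpace (hq : IsGeneric q)
    (hB : B ∈ ⨆ k ∈ Icc (-1 : ℤ) 1, weightSpace q A k) (n : ℕ) :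
    B ^ n ∈ ⨆ k ∈ Icc (-n : ℤ) n, weightSpace q A k := by
  induction n with
  | zero => simp [mem_weightSpace]
  | succ n ih =>
    rw [pow_succ]
    refine SetLike.le_def.mp ?_ (Submodule.mul_mem_mul ih hB)
    simp only [Submodule.iSup_mul, Submodule.mul_iSup, iSup_le_iff]
    intro l hl k hk
    have hkl : k + l ∈ Icc (-(n + 1 : ℕ) : ℤ) (n + 1 : ℕ) := by
      rw [mem_Icc] at hk hl ⊢
      omega
    exact (weightSpace_mul_le hq k l).trans (le_biSup (weightSpace q A) hkl)

end WeightSpace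

section QSerrePair

open Finset Polynomial MulOpposite

variable {𝕜 R R' : Type*} [Field 𝕜] [Ring R] [Algebra 𝕜 R] [Ring R'] [Algebra 𝕜 R'] {q : 𝕜} {d : ℕ}
  {A B : R} {A' B' : R'}

/-- A pair of diagonalizable elements of type 1 and diameter `d` that satisfy both `q`-Serre
relations: the part of a tridiagonal pair of `q`-Serre type that does not refer to a module. -/
structure QSerrePair (q : 𝕜) (d : ℕ) (A B : R) : Prop where
  aeval_left : aeval A (spectralPoly q d) = 0
  aeval_right : aeval B (spectralPoly q d) = 0
  serre_left : IsQSerre q A B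
  serre_right : IsQSerre q B A

theorem IsQSerre.op (h : IsQSerre q A B) : IsQSerre q (op A) (op B) := by
  simpa only [IsQSerre, op_add, op_mul, op_smul, op_pow, mul_assoc, add_comm] using
    congrArg MulOpposite.op h.symm

theorem IsQSerre.prod (h : IsQSerre q A B) (h' : IsQSerre q A' B') :
    IsQSerre q (A, A') (B, B') :=
  Prod.ext h h'

namespace QSerrePair

theorem symm (h : QSerrePair q d A B) : QSerrePair q d B A :=
  ⟨h.aeval_right, h.aeval_left, h.serre_right, h.serre_left⟩

theorem op (h : QSerrePair q d A B) : QSerrePair q d (op A) (op B) where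
  aeval_left := by rw [aeval_op_apply, h.aeval_left, op_zero]
  aeval_right := by rw [aeval_op_apply, h.aeval_right, op_zero]
  serre_left := h.serre_left.op
  serre_right := h.serre_right.op

theorem prod (h : QSerrePair q d A B) (h' : QSerrePair q d A' B') :
    QSerrePair q d (A, A') (B, B') where
  aeval_left := by rw [aeval_prod_apply, h.aeval_left, h'.aeval_left, Prod.mk_zero_zero]
  aeval_right := by rw [aeval_prod_apply, h.aeval_right, h'.aeval_right, Prod.mk_zero_zero]
  serre_left := h.serre_left.prod h'.serre_left
  serre_right := h.serre_right.prod h'.serre_right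

theorem exists_pow_eq_sum (h : QSerrePair q d A B) (hq : IsGeneric q) (n : ℕ) :
    ∃ Y : ℤ → R, (∀ k, Y k ∈ weightSpace q A k) ∧ B ^ n = ∑ k ∈ Icc (-n : ℤ) n, Y k := by
  have hB := h.serre_left.mem_iSup_weightSpace hq
    (isUnit_of_aeval_spectralPoly_eq_zero hq h.aeval_left)
  obtain ⟨Y, hY⟩ := (Submodule.mem_iSup_finset_iff_exists_sum _ _).mp
    (pow_mem_iSup_weightSpace hq hB n)
  exact ⟨fun k => Y k, fun k => (Y k).2, hY.symm⟩

theorem exists_pow_mul_pow_mul_pow_eq_sum (h : QSerrePair q d A B) (hq : IsGeneric q) (N n : ℕ) :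
    ∃ K : ℤ → R, ∀ a b : ℕ, a + b = N →
      A ^ a * B ^ n * A ^ b = ∑ k ∈ Icc (-n : ℤ) n, q ^ (((b : ℤ) - a) * k) • K k := by
  obtain ⟨Y, hY, hsum⟩ := h.exists_pow_eq_sum hq n
  refine ⟨fun k => q ^ (N * k) • (A ^ N * Y k), fun a b hab => ?_⟩
  rw [hsum, mul_sum, sum_mul]
  refine sum_congr rfl fun k _ => ?_
  rw [mul_assoc, mul_pow_of_mem_weightSpace hq (hY k), mul_smul_comm, ← mul_assoc, ← pow_add, hab,
    smul_smul, ← zpow_add₀ hq.ne_zero, ← hab]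
  push_cast
  ring_nf

/-- Left multiplication by the idempotent of the lowest weight kills all components of `B ^ n` but
those that lower the weight, so half of the nodes suffice for interpolation. -/
theorem exists_lowIdem_mul_pow_mul_pow_eq_sum (h : QSerrePair q d A B) (hq : IsGeneric q) (n : ℕ) :
    ∃ Y : ℤ → R, Y 0 = lowIdem q d A * B ^ n * lowIdem q d A ∧ ∀ t : ℕ,
      q ^ (d * t) • (lowIdem q d A * B ^ n * A ^ t) =
        ∑ k ∈ Icc (0 : ℤ) n, q ^ (2 * (t : ℤ) * k) • Y k := by
  obtain ⟨Y, hY, hsum⟩ := h.exists_pow_eq_sum hq n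
  set e := lowIdem q d A
  have hweight : ∀ k, e * Y k * A = qEigenvalue q d k • (e * Y k) := fun k => by
    rw [mul_assoc, mem_weightSpace.mp (hY k), mul_smul_comm, ← mul_assoc, lowIdem_mul h.aeval_left,
      smul_mul_assoc, smul_smul, ← qEigenvalue_add hq, zero_add]
  have hzero : ∀ k ∉ Icc (0 : ℤ) d, e * Y k = 0 := fun k hk => by
    have := mul_aeval_of_mul_eq_smul (hweight k) (spectralPoly q d)
    rw [h.aeval_left, mul_zero, eq_comm, smul_eq_zero] at this
    exact this.resolve_left (eval_spectralPoly_ne_zero hq hk)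
  have hsum' : e * B ^ n = ∑ k ∈ Icc (0 : ℤ) n, e * Y k := by
    rw [hsum, mul_sum]
    refine (sum_subset (Icc_subset_Icc_left (by simp)) fun k hk hk' => hzero k ?_).symm
    rw [mem_Icc] at hk hk' ⊢
    omega
  refine ⟨fun k => e * Y k, ?_, fun t => ?_⟩
  · have hdiag : ∀ k ∈ Icc (0 : ℤ) n, k ≠ 0 → e * Y k * e = 0 := fun k hk hk0 => by
      by_cases hkd : k ∈ Icc (1 : ℤ) d
      · exact mul_lowIdem_eq_zero hkd (hweight k)
      · rw [hzero k (by rw [mem_Icc] at *; omega), zero_mul]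
    rw [hsum', sum_mul, sum_eq_single_of_mem 0 (by simp) hdiag,
      mul_lowIdem_eq_self hq (hweight 0)]
  · rw [hsum', sum_mul, smul_sum]
    refine sum_congr rfl fun k _ => ?_
    have hpow := mul_aeval_of_mul_eq_smul (hweight k) (X ^ t : 𝕜[X])
    rw [map_pow, aeval_X, eval_pow, eval_X] at hpow
    rw [hpow, smul_smul, qEigenvalue, ← zpow_natCast, ← zpow_natCast, ← zpow_mul,
      ← zpow_add₀ hq.ne_zero]
    push_cast
    ring_nf

/-- Interpolation in the exponent of `A`, with nodes `0, …, n`. -/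
theorem lowIdem_mul_pow_mul_pow_mem (h : QSerrePair q d A B) (hq : IsGeneric q)
    {S : Submodule 𝕜 R} {n : ℕ} (hS : ∀ m ≤ n, lowIdem q d A * B ^ n * A ^ m ∈ S) (t : ℕ) :
    lowIdem q d A * B ^ n * A ^ t ∈ S := by
  obtain ⟨Y, -, hY⟩ := h.exists_lowIdem_mul_pow_mul_pow_eq_sum hq n
  rw [← S.smul_mem_iff (pow_ne_zero (d * t) hq.ne_zero), hY]
  refine hq.sum_zpow_smul_mem
    (T := (range (n + 1)).map ⟨fun m : ℕ => 2 * (m : ℤ), fun a b hab => by simpa using hab⟩)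
    (by simp) (fun a ha => ?_) _
  obtain ⟨m, hm, rfl⟩ := mem_map.mp ha
  have := S.smul_mem (q ^ (d * m)) (hS m (by simpa [Nat.lt_succ_iff] using hm))
  rwa [hY] at this

/-- As `lowIdem_mul_pow_mul_pow_mem`, with one node traded for the constant coefficient. -/
theorem lowIdem_mul_pow_mul_pow_mem' (h : QSerrePair q d A B) (hq : IsGeneric q)
    {S : Submodule 𝕜 R} {n : ℕ} (h0 : lowIdem q d A * B ^ n * lowIdem q d A ∈ S)
    (hS : ∀ m < n, lowIdem q d A * B ^ n * A ^ m ∈ S) (t : ℕ) :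
    lowIdem q d A * B ^ n * A ^ t ∈ S := by
  obtain ⟨Y, hY0, hY⟩ := h.exists_lowIdem_mul_pow_mul_pow_eq_sum hq n
  have hsplit : ∀ t : ℕ, ∑ k ∈ Icc (0 : ℤ) n, q ^ (2 * (t : ℤ) * k) • Y k ∈ S ↔
      ∑ k ∈ Icc (1 : ℤ) n, q ^ (2 * (t : ℤ) * k) • Y k ∈ S := fun t => by
    have h0n : Icc (0 : ℤ) n = insert 0 (Icc (1 : ℤ) n) := by grind
    rw [h0n, sum_insert (by simp), mul_zero, zpow_zero, one_smul]
    exact S.add_mem_iff_right (hY0 ▸ h0)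
  rw [← S.smul_mem_iff (pow_ne_zero (d * t) hq.ne_zero), hY, hsplit]
  refine hq.sum_zpow_smul_mem
    (T := (range n).map ⟨fun m : ℕ => 2 * (m : ℤ), fun a b hab => by simpa using hab⟩)
    (by simp) (fun a ha => ?_) _
  obtain ⟨m, hm, rfl⟩ := mem_map.mp ha
  have := S.smul_mem (q ^ (d * m)) (hS m (by simpa using hm))
  rwa [hY, hsplit] at this

theorem pow_mul_pow_mul_lowIdem_mem' (h : QSerrePair q d A B) (hq : IsGeneric q)
    {S : Submodule 𝕜 R} {n : ℕ} (h0 : lowIdem q d A * B ^ n * lowIdem q d A ∈ S)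
    (hS : ∀ m < n, A ^ m * B ^ n * lowIdem q d A ∈ S) (t : ℕ) :
    A ^ t * B ^ n * lowIdem q d A ∈ S := by
  have := h.op.lowIdem_mul_pow_mul_pow_mem' hq (n := n) (t := t)
    (S := S.comap (opLinearEquiv 𝕜).symm.toLinearMap)
  simp only [lowIdem_op, ← op_pow, ← op_mul, Submodule.mem_comap, LinearEquiv.coe_coe,
    coe_opLinearEquiv_symm, unop_op, ← mul_assoc] at this
  exact this h0 hS

end QSerrePair

end QSerrePair

section Corner

open Finset Polynomial MulOpposite

variable {𝕜 R R' : Type*} [Field 𝕜] [Ring R] [Algebra 𝕜 R] [Ring R'] [Algebra 𝕜 R'] {q : 𝕜} {d : ℕ}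
  {A B : R}

theorem lowIdem_prod (A : R) (A' : R') :
    lowIdem q d (A, A') = (lowIdem q d A, lowIdem q d A') := aeval_prod_apply _ _

namespace QSerrePair

/-- Interpolation in `R × Rᵐᵒᵖ`, where the two sides are the components of a single element. -/
theorem corner_swap_of_forall_le (h : QSerrePair q d A B) (hq : IsGeneric q) {i l : ℕ}
    (hle : ∀ m ≤ i, lowIdem q d A * B ^ i * A ^ m * (B ^ l * lowIdem q d A) =
      lowIdem q d A * B ^ l * (A ^ m * B ^ i * lowIdem q d A)) (t : ℕ) :
    lowIdem q d A * B ^ i * A ^ t * (B ^ l * lowIdem q d A) =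
      lowIdem q d A * B ^ l * (A ^ t * B ^ i * lowIdem q d A) := by
  set e := lowIdem q d A with he
  let S : Submodule 𝕜 (R × Rᵐᵒᵖ) := LinearMap.eqLocus
    (LinearMap.mulRight 𝕜 (B ^ l * e) ∘ₗ LinearMap.fst 𝕜 R Rᵐᵒᵖ)
    (LinearMap.mulLeft 𝕜 (e * B ^ l) ∘ₗ (opLinearEquiv 𝕜).symm.toLinearMap ∘ₗ
      LinearMap.snd 𝕜 R Rᵐᵒᵖ)
  have hmem : ∀ m : ℕ, lowIdem q d (A, MulOpposite.op A) *
      (B, MulOpposite.op B) ^ i * (A, MulOpposite.op A) ^ m ∈ S ↔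
      e * B ^ i * A ^ m * (B ^ l * e) = e * B ^ l * (A ^ m * B ^ i * e) := fun m => by
    simp [S, lowIdem_prod, lowIdem_op, ← he, mul_assoc]
  exact (hmem t).mp ((h.prod h.op).lowIdem_mul_pow_mul_pow_mem hq
    (fun m hm => (hmem m).mpr (hle m hm)) t)

/-- The difference of the two sides is an antisymmetric Laurent polynomial in `q ^ (l - i)`, so it
vanishes at `1` in addition to the `2 j` given nodes. -/
theorem corner_swap_of_forall_lt (h : QSerrePair q d A B) (hq : IsGeneric q) {j N : ℕ}
    (hN : 2 * j ≤ N) (e : R) (hlt : ∀ i l, i + l = N → i < j →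
      e * (B ^ i * A ^ j * B ^ l) * e = e * (B ^ l * A ^ j * B ^ i) * e)
    {i l : ℕ} (hil : i + l = N) :
    e * (B ^ i * A ^ j * B ^ l) * e = e * (B ^ l * A ^ j * B ^ i) * e := by
  obtain ⟨K, hK⟩ := h.symm.exists_pow_mul_pow_mul_pow_eq_sum hq N j
  have hneg : ∀ s : ℤ, ∑ k ∈ Icc (-j : ℤ) j, q ^ (-s * k) • K k =
      ∑ k ∈ Icc (-j : ℤ) j, q ^ (s * k) • K (-k) := fun s =>
    sum_nbij' (fun k => -k) (fun k => -k) (by grind) (by grind) (by simp) (by simp) (by simp)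
  have hdiff : ∀ i l, i + l = N →
      e * (B ^ i * A ^ j * B ^ l) * e - e * (B ^ l * A ^ j * B ^ i) * e =
        ∑ k ∈ Icc (-j : ℤ) j, q ^ (((l : ℤ) - i) * k) • (e * (K k - K (-k)) * e) :=
    fun i l hil => by
      rw [hK i l hil, hK l i (by omega), ← neg_sub (l : ℤ) i, hneg, ← sub_mul, ← mul_sub,
        ← sum_sub_distrib, mul_sum, sum_mul]
      simp only [← smul_sub, mul_smul_comm, smul_mul_assoc]
  have hone : ∑ k ∈ Icc (-j : ℤ) j, q ^ (0 * k) • (e * (K k - K (-k)) * e) = 0 := by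
    have h0 := hneg 0
    simp only [neg_zero, zero_mul, zpow_zero, one_smul] at h0 ⊢
    rw [← sum_mul, ← mul_sum, sum_sub_distrib, h0, sub_self, mul_zero, zero_mul]
  rw [← sub_eq_zero, hdiff i l hil, ← Submodule.mem_bot 𝕜]
  refine hq.sum_zpow_smul_mem (T := insert 0 ((range j).image (fun i : ℕ => (N : ℤ) - 2 * i) ∪
    (range j).image (fun i : ℕ => 2 * (i : ℤ) - N))) ?_
    (fun s hs => (Submodule.mem_bot 𝕜).mpr ?_) _
  · rw [card_insert_of_notMem (by grind), card_union_of_disjoint (disjoint_left.mpr (by grind)),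
      card_image_of_injective _ (fun a b => by simp),
      card_image_of_injective _ (fun a b => by simp), card_range]
    omega
  · rw [mem_insert, mem_union, mem_image, mem_image] at hs
    obtain rfl | ⟨m, hm, rfl⟩ | ⟨m, hm, rfl⟩ := hs
    · exact hone
    all_goals
      have hmj := mem_range.mp hm
      have hswap := hlt m (N - m) (by omega) hmj
    · rwa [← sub_eq_zero, hdiff m (N - m) (by omega),
        show ((N - m : ℕ) : ℤ) - m = N - 2 * m by omega] at hswap
    · rwa [eq_comm, ← sub_eq_zero, hdiff (N - m) m (by omega),
        show (m : ℤ) - (N - m : ℕ) = 2 * m - N by omega] at hswap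

theorem corner_swap (h : QSerrePair q d A B) (hq : IsGeneric q) (j i l : ℕ) :
    lowIdem q d A * (B ^ i * A ^ j * B ^ l) * lowIdem q d A =
      lowIdem q d A * (B ^ l * A ^ j * B ^ i) * lowIdem q d A := by
  induction j using Nat.strong_induction_on generalizing i l with
  | _ j ih =>
    have of_lt : ∀ i l, i < j → lowIdem q d A * (B ^ i * A ^ j * B ^ l) * lowIdem q d A =
        lowIdem q d A * (B ^ l * A ^ j * B ^ i) * lowIdem q d A := fun i l hij => by
      simpa only [mul_assoc] using h.corner_swap_of_forall_le hq
        (fun m hm => by simpa only [mul_assoc] using ih m (by omega) i l) j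
    rcases lt_or_ge i j with hi | hi
    · exact of_lt i l hi
    rcases lt_or_ge l j with hl | hl
    · exact (of_lt l i hl).symm
    exact h.corner_swap_of_forall_lt hq (by omega) _ (fun i l _ => of_lt i l) rfl

end QSerrePair

end Corner

section CornerAlgebra

open Finset Polynomial MulOpposite Pointwise

variable {𝕜 R : Type*} [Field 𝕜] [Ring R] [Algebra 𝕜 R] {q : 𝕜} {d : ℕ} {A B : R}

/-- The subalgebra generated by the elements `e B ^ k e`, where `e` is the idempotent of `A` for
its lowest weight. It turns out to contain all of `e ⟨A, B⟩ e`. -/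
def cornerAlgebra (q : 𝕜) (d : ℕ) (A B : R) : Subalgebra 𝕜 R :=
  Algebra.adjoin 𝕜 (Set.range fun k : ℕ => lowIdem q d A * B ^ k * lowIdem q d A)

theorem lowIdem_mul_pow_mul_lowIdem_mem (k : ℕ) :
    lowIdem q d A * B ^ k * lowIdem q d A ∈ cornerAlgebra q d A B :=
  Algebra.subset_adjoin ⟨k, rfl⟩

/-- The powers of `A` and of `B`, viewed as the letters of words in `A` and `B`. -/
def powerLetters (A B : R) : Set R := Submonoid.powers A ∪ Submonoid.powers B

theorem pow_mem_powerLetters {X : R} (hX : X = A ∨ X = B) (n : ℕ) : X ^ n ∈ powerLetters A B := by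
  obtain rfl | rfl := hX
  exacts [.inl ⟨n, rfl⟩, .inr ⟨n, rfl⟩]

theorem exists_eq_pow_of_mem_powerLetters {y : R} (hy : y ∈ powerLetters A B) :
    ∃ X, (X = A ∨ X = B) ∧ ∃ n : ℕ, y = X ^ n := by
  obtain ⟨n, rfl⟩ | ⟨n, rfl⟩ := hy
  exacts [⟨A, .inl rfl, n, rfl⟩, ⟨B, .inr rfl, n, rfl⟩]

theorem powerLetters_pow_subset {k l : ℕ} (hkl : k ≤ l) :
    powerLetters A B ^ k ⊆ powerLetters A B ^ l :=
  Set.pow_subset_pow_right (pow_zero A ▸ pow_mem_powerLetters (.inl rfl) 0) hkl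

theorem mul_mul_mem_powerLetters_pow {j k : ℕ} {p x u : R} (hp : p ∈ powerLetters A B ^ j)
    (hx : x ∈ powerLetters A B) (hu : u ∈ powerLetters A B ^ k) :
    p * x * u ∈ powerLetters A B ^ (j + k + 1) := by
  rw [add_right_comm, pow_add, pow_succ]
  exact Set.mul_mem_mul (Set.mul_mem_mul hp hx) hu

/-- All words of `L + 1` letters in which the letter after the first `j` has exponent `n` are mapped
to the corner algebra by `x ↦ e x e`. -/
def WordsInCorner (q : 𝕜) (d : ℕ) (A B : R) (L n j : ℕ) : Prop :=
  ∀ k, j + k = L → ∀ p ∈ powerLetters A B ^ j, ∀ u ∈ powerLetters A B ^ k, ∀ X, X = A ∨ X = B →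
    lowIdem q d A * (p * X ^ n * u) * lowIdem q d A ∈ cornerAlgebra q d A B

namespace QSerrePair

theorem pow_mul_pow_mul_pow_mem (h : QSerrePair q d A B) (hq : IsGeneric q) {S : Submodule 𝕜 R}
    {N n : ℕ} (hS : ∀ a b, a + b = N → a ≤ n ∨ b < n → A ^ a * B ^ n * A ^ b ∈ S) {a b : ℕ}
    (hab : a + b = N) : A ^ a * B ^ n * A ^ b ∈ S := by
  rcases le_or_gt N (2 * n) with hN | hN
  · exact hS a b hab (by omega)
  obtain ⟨K, hK⟩ := h.exists_pow_mul_pow_mul_pow_eq_sum hq N n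
  rw [hK a b hab]
  refine hq.sum_zpow_smul_mem (T := (range (n + 1)).image (fun i : ℕ => (N : ℤ) - 2 * i) ∪
    (range n).image (fun i : ℕ => 2 * (i : ℤ) - N)) ?_ (fun s hs => ?_) _
  · rw [card_union_of_disjoint (disjoint_left.mpr (by grind)),
      card_image_of_injective _ (fun a b => by simp),
      card_image_of_injective _ (fun a b => by simp), card_range, card_range]
    omega
  · rw [mem_union, mem_image, mem_image] at hs
    obtain ⟨m, hm, rfl⟩ | ⟨m, hm, rfl⟩ := hs
    all_goals have hmn := mem_range.mp hm
    · have hmem := hS m (N - m) (by omega) (by omega)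
      rwa [hK m (N - m) (by omega), show ((N - m : ℕ) : ℤ) - m = N - 2 * m by omega] at hmem
    · have hmem := hS (N - m) m (by omega) (by omega)
      rwa [hK (N - m) m (by omega), show (m : ℤ) - (N - m : ℕ) = 2 * m - N by omega] at hmem

theorem lowIdem_mul_lowIdem_mul (h : QSerrePair q d A B) (hq : IsGeneric q) (x : R) :
    lowIdem q d A * (lowIdem q d A * x) = lowIdem q d A * x := by
  rw [← mul_assoc, mul_lowIdem_eq_self hq (lowIdem_mul h.aeval_left)]

theorem commute_of_mem_cornerAlgebra (h : QSerrePair q d A B) (hq : IsGeneric q) {x y : R}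
    (hx : x ∈ cornerAlgebra q d A B) (hy : y ∈ cornerAlgebra q d A B) : Commute x y := by
  set e := lowIdem q d A
  have hswap : ∀ i l : ℕ, e * B ^ i * e * (B ^ l * e) = e * B ^ l * e * (B ^ i * e) := fun i l => by
    let S : Submodule 𝕜 R := LinearMap.eqLocus
      (LinearMap.mulLeftRight 𝕜 (e * B ^ i, B ^ l * e))
      (LinearMap.mulLeftRight 𝕜 (e * B ^ l, B ^ i * e))
    have hpow : ∀ n : ℕ, A ^ n ∈ S := fun n => by
      simpa [S, mul_assoc] using h.corner_swap hq n i l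
    have haeval : ∀ p : 𝕜[X], aeval A p ∈ S := fun p => by
      rw [aeval_eq_sum_range]
      exact S.sum_mem fun n _ => S.smul_mem _ (hpow n)
    exact haeval _
  have hgen : ∀ i l : ℕ, Commute (e * B ^ i * e) (e * B ^ l * e) := fun i l => by
    have := hswap i l
    simp only [Commute, SemiconjBy, mul_assoc, h.lowIdem_mul_lowIdem_mul hq, e] at this ⊢
    exact this
  refine Algebra.commute_of_mem_adjoin_of_forall_mem_commute hy ?_
  rintro _ ⟨l, rfl⟩
  refine (Algebra.commute_of_mem_adjoin_of_forall_mem_commute hx ?_).symm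
  rintro _ ⟨i, rfl⟩
  exact hgen l i

theorem lowIdem_mul_pow_mul_pow_mul_mem (h : QSerrePair q d A B) (hq : IsGeneric q) {n : ℕ} {u : R}
    (hu : lowIdem q d A * u * lowIdem q d A ∈ cornerAlgebra q d A B)
    (hlt : ∀ m < n, lowIdem q d A * (B ^ n * A ^ m * u) * lowIdem q d A ∈ cornerAlgebra q d A B)
    (t : ℕ) : lowIdem q d A * (B ^ n * A ^ t * u) * lowIdem q d A ∈ cornerAlgebra q d A B := by
  have hmem := h.lowIdem_mul_pow_mul_pow_mem' hq (n := n) (t := t)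
    (S := (cornerAlgebra q d A B).toSubmodule.comap (LinearMap.mulRight 𝕜 (u * lowIdem q d A)))
  have hmul := mul_mem (lowIdem_mul_pow_mul_lowIdem_mem n) hu
  simp only [Submodule.mem_comap, LinearMap.mulRight_apply, Subalgebra.mem_toSubmodule,
    mul_assoc, h.lowIdem_mul_lowIdem_mul hq] at hmem hlt hmul ⊢
  exact hmem hmul hlt

theorem mul_pow_mul_pow_mul_lowIdem_mem (h : QSerrePair q d A B) (hq : IsGeneric q) {n : ℕ} {p : R}
    (hp : lowIdem q d A * p * lowIdem q d A ∈ cornerAlgebra q d A B)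
    (hlt : ∀ m < n, lowIdem q d A * (p * A ^ m * B ^ n) * lowIdem q d A ∈ cornerAlgebra q d A B)
    (t : ℕ) : lowIdem q d A * (p * A ^ t * B ^ n) * lowIdem q d A ∈ cornerAlgebra q d A B := by
  have hmem := h.pow_mul_pow_mul_lowIdem_mem' hq (n := n) (t := t)
    (S := (cornerAlgebra q d A B).toSubmodule.comap (LinearMap.mulLeft 𝕜 (lowIdem q d A * p)))
  have hmul := mul_mem hp (lowIdem_mul_pow_mul_lowIdem_mem n)
  simp only [Submodule.mem_comap, LinearMap.mulLeft_apply, Subalgebra.mem_toSubmodule,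
    mul_assoc, h.lowIdem_mul_lowIdem_mul hq] at hmem hlt hmul ⊢
  exact hmem hmul hlt

theorem wordsInCorner_zero (h : QSerrePair q d A B) (hq : IsGeneric q) {L n : ℕ}
    (hL : ∀ w ∈ powerLetters A B ^ L,
      lowIdem q d A * w * lowIdem q d A ∈ cornerAlgebra q d A B)
    (hlt : ∀ m < n, ∀ j, WordsInCorner q d A B L m j) : WordsInCorner q d A B L n 0 := by
  rintro k hk p hp u hu X (rfl | rfl)
  all_goals rw [zero_add] at hk; subst hk; rw [pow_zero, Set.mem_one] at hp; subst hp; rw [one_mul]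
  · rw [← mul_assoc, lowIdem_mul_pow h.aeval_left, smul_mul_assoc, smul_mul_assoc]
    exact Subalgebra.smul_mem _ (hL u hu) _
  · obtain _ | k := k
    · obtain rfl : u = 1 := by simpa using hu
      simpa using lowIdem_mul_pow_mul_lowIdem_mem n
    rw [pow_succ'] at hu
    obtain ⟨y, hy, u, hu, rfl⟩ := hu
    obtain ⟨Y, rfl | rfl, t, rfl⟩ := exists_eq_pow_of_mem_powerLetters hy
    · have hB : X ^ n ∈ powerLetters Y X ^ 1 := by simpa using pow_mem_powerLetters (.inr rfl) n
      have hlt' := fun m hm => hlt m hm 1 k (add_comm 1 k) _ hB u hu Y (.inl rfl)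
      simpa only [mul_assoc] using h.lowIdem_mul_pow_mul_pow_mul_mem hq
        (hL u (powerLetters_pow_subset k.le_succ hu)) hlt' t
    · simp only [← mul_assoc, ← pow_add]
      rw [mul_assoc _ _ u]
      refine hL _ ?_
      rw [pow_succ']
      exact Set.mul_mem_mul (pow_mem_powerLetters (.inr rfl) _) hu

theorem wordsInCorner_last (h : QSerrePair q d A B) (hq : IsGeneric q) {L n : ℕ}
    (hL : ∀ w ∈ powerLetters A B ^ L,
      lowIdem q d A * w * lowIdem q d A ∈ cornerAlgebra q d A B)
    (hlt : ∀ m < n, ∀ j, WordsInCorner q d A B L m j) : WordsInCorner q d A B L n L := by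
  rintro k hk p hp u hu X (rfl | rfl)
  all_goals obtain rfl : k = 0 := by omega
  all_goals rw [pow_zero, Set.mem_one] at hu; subst hu; rw [mul_one]
  · rw [mul_assoc, mul_assoc, pow_mul_lowIdem h.aeval_left, mul_smul_comm, mul_smul_comm,
      ← mul_assoc]
    exact Subalgebra.smul_mem _ (hL p hp) _
  · obtain _ | k := L
    · obtain rfl : p = 1 := by simpa using hp
      simpa using lowIdem_mul_pow_mul_lowIdem_mem n
    rw [pow_succ] at hp
    obtain ⟨p, hp, y, hy, rfl⟩ := hp
    obtain ⟨Y, rfl | rfl, t, rfl⟩ := exists_eq_pow_of_mem_powerLetters hy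
    · have hB : X ^ n ∈ powerLetters Y X ^ 1 := by simpa using pow_mem_powerLetters (.inr rfl) n
      have hlt' := fun m hm => hlt m hm k 1 rfl p hp _ hB Y (.inl rfl)
      simpa only [mul_assoc] using h.mul_pow_mul_pow_mul_lowIdem_mem hq
        (hL p (powerLetters_pow_subset k.le_succ hp)) hlt' t
    · rw [mul_assoc p, ← pow_add]
      refine hL _ ?_
      rw [pow_succ]
      exact Set.mul_mem_mul hp (pow_mem_powerLetters (.inr rfl) _)

theorem lowIdem_mul_interior_mul_lowIdem_mem {X Y : R} (h : QSerrePair q d Y X)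
    (hq : IsGeneric q) (hX : X = A ∨ X = B) (hY : Y = A ∨ Y = B) {n j k : ℕ}
    (hlt : ∀ m < n, ∀ i, WordsInCorner q d A B (j + k + 2) m i)
    (hj : WordsInCorner q d A B (j + k + 2) n j) {p u : R} (hp : p ∈ powerLetters A B ^ j)
    (hu : u ∈ powerLetters A B ^ k) (a b : ℕ) :
    lowIdem q d A * (p * (Y ^ a * X ^ n * Y ^ b) * u) * lowIdem q d A ∈
      cornerAlgebra q d A B := by
  have hmem := h.pow_mul_pow_mul_pow_mem hq (N := a + b) (n := n)
    (S := (cornerAlgebra q d A B).toSubmodule.comap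
    (LinearMap.mulLeftRight 𝕜 (lowIdem q d A * p, u * lowIdem q d A))) (a := a) (b := b)
  simp only [Submodule.mem_comap, LinearMap.mulLeftRight_apply, Subalgebra.mem_toSubmodule,
    mul_assoc] at hmem ⊢
  refine hmem (fun i l _ hor => ?_) trivial
  have hYp : ∀ t, Y ^ t ∈ powerLetters A B := pow_mem_powerLetters hY
  have hXp : X ^ n ∈ powerLetters A B := pow_mem_powerLetters hX n
  rcases lt_or_ge l n with hl | hl
  · have hpre : p * Y ^ i * X ^ n ∈ powerLetters A B ^ (j + 2) := by
      rw [pow_succ, pow_succ]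
      exact Set.mul_mem_mul (Set.mul_mem_mul hp (hYp i)) hXp
    simpa only [mul_assoc] using hlt l hl (j + 2) k (by omega) _ hpre u hu Y hY
  · have hsuf : X ^ n * (Y ^ l * u) ∈ powerLetters A B ^ (k + 2) := by
      rw [pow_succ', pow_succ']
      exact Set.mul_mem_mul hXp (Set.mul_mem_mul (hYp l) hu)
    have hi : WordsInCorner q d A B (j + k + 2) i j := by
      rcases (show i ≤ n by omega).lt_or_eq with hi | rfl
      exacts [hlt i hi j, hj]
    simpa only [mul_assoc] using hi (k + 2) (by omega) p hp _ hsuf Y hY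

theorem wordsInCorner_succ (h : QSerrePair q d A B) (hq : IsGeneric q) {n j k : ℕ}
    (hL : ∀ w ∈ powerLetters A B ^ (j + k + 2),
      lowIdem q d A * w * lowIdem q d A ∈ cornerAlgebra q d A B)
    (hlt : ∀ m < n, ∀ i, WordsInCorner q d A B (j + k + 2) m i)
    (hj : WordsInCorner q d A B (j + k + 2) n j) :
    WordsInCorner q d A B (j + k + 2) n (j + 1) := by
  rintro l hl p hp u hu X hX
  obtain rfl : l = k + 1 := by omega
  have hp' := hp
  have hu' := hu
  rw [pow_succ] at hp'
  rw [pow_succ'] at hu'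
  obtain ⟨p', hp', y, hy, rfl⟩ := hp'
  obtain ⟨z, hz, u', hu', rfl⟩ := hu'
  obtain ⟨Y, hY, a, rfl⟩ := exists_eq_pow_of_mem_powerLetters hy
  obtain ⟨Z, hZ, b, rfl⟩ := exists_eq_pow_of_mem_powerLetters hz
  by_cases hYX : Y = X
  · subst hYX
    have hmem := hL _ (mul_mul_mem_powerLetters_pow (k := k + 1) hp'
      (pow_mem_powerLetters hY (a + n)) hu)
    simpa only [pow_add, mul_assoc] using hmem
  by_cases hZX : Z = X
  · subst hZX
    have hmem := hL _ (add_right_comm j 1 k ▸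
      mul_mul_mem_powerLetters_pow hp (pow_mem_powerLetters hZ (n + b)) hu')
    simpa only [pow_add, mul_assoc] using hmem
  obtain rfl : Y = Z := by grind
  have hpair : QSerrePair q d Y X := by
    rcases hY with rfl | rfl <;> rcases hX with rfl | rfl
    exacts [absurd rfl hYX, h, h.symm, absurd rfl hYX]
  simpa only [mul_assoc] using
    hpair.lowIdem_mul_interior_mul_lowIdem_mem hq hX hY hlt hj hp' hu' a b

theorem lowIdem_mul_mul_lowIdem_mem_of_mem_powerLetters_pow (h : QSerrePair q d A B)
    (hq : IsGeneric q) {L : ℕ} {w : R} (hw : w ∈ powerLetters A B ^ L) :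
    lowIdem q d A * w * lowIdem q d A ∈ cornerAlgebra q d A B := by
  induction L generalizing w with
  | zero =>
    obtain rfl : w = 1 := by simpa using hw
    simpa using lowIdem_mul_pow_mul_lowIdem_mem (A := A) (B := B) 0
  | succ L hL =>
    have hwords : ∀ n j, WordsInCorner q d A B L n j := fun n => by
      induction n using Nat.strong_induction_on with
      | _ n hlt =>
        intro j
        induction j with
        | zero => exact h.wordsInCorner_zero hq @hL hlt
        | succ j hj =>
          intro k hk
          obtain _ | k := k
          · obtain rfl : j + 1 = L := hk
            exact h.wordsInCorner_last hq @hL hlt 0 rfl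
          · obtain rfl : j + k + 2 = L := by omega
            exact h.wordsInCorner_succ hq @hL hlt hj (k + 1) hk
    rw [pow_succ] at hw
    obtain ⟨p, hp, y, hy, rfl⟩ := hw
    obtain ⟨X, hX, n, rfl⟩ := exists_eq_pow_of_mem_powerLetters hy
    simpa using hwords n L 0 rfl p hp 1 rfl X hX

theorem lowIdem_mul_mul_lowIdem_mem (h : QSerrePair q d A B)
    (hq : IsGeneric q) {w : R} (hw : w ∈ Algebra.adjoin 𝕜 {A, B}) :
    lowIdem q d A * w * lowIdem q d A ∈ cornerAlgebra q d A B := by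
  have hcl : ∀ w ∈ Submonoid.closure {A, B}, ∃ L, w ∈ powerLetters A B ^ L := fun w hw => by
    induction hw using Submonoid.closure_induction with
    | mem X hX => exact ⟨1, by simpa using pow_mem_powerLetters hX 1⟩
    | one => exact ⟨0, by simp⟩
    | mul x y _ _ hx hy =>
      obtain ⟨⟨j, hj⟩, k, hk⟩ := And.intro hx hy
      exact ⟨j + k, pow_add (powerLetters A B) j k ▸ Set.mul_mem_mul hj hk⟩
  have hspan : Submodule.span 𝕜 (Submonoid.closure {A, B} : Set R) ≤
      (cornerAlgebra q d A B).toSubmodule.comap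
        (LinearMap.mulLeftRight 𝕜 (lowIdem q d A, lowIdem q d A)) :=
    Submodule.span_le.mpr fun w hw =>
      have ⟨_, hL⟩ := hcl w hw
      h.lowIdem_mul_mul_lowIdem_mem_of_mem_powerLetters_pow hq hL
  rw [← Subalgebra.mem_toSubmodule, Algebra.adjoin_eq_span] at hw
  exact hspan hw

end QSerrePair

end CornerAlgebra

section Palindrome

open MulOpposite

variable {𝕜 R : Type*} [Field 𝕜] [Ring R] [Algebra 𝕜 R] {q : 𝕜} {d : ℕ} {A B : R}

/-- Evaluation of noncommutative polynomials in two letters at `A` (the letter `false`) and `B` (the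
letter `true`). The involution `star` of the free algebra is the reversal of words. -/
def wordEval (A B : R) : FreeAlgebra 𝕜 Bool →ₐ[𝕜] R := FreeAlgebra.lift 𝕜 (Bool.rec A B)

theorem wordEval_false : wordEval (𝕜 := 𝕜) A B (ι 𝕜 false) = A := FreeAlgebra.lift_ι_apply _ _

theorem wordEval_true : wordEval (𝕜 := 𝕜) A B (ι 𝕜 true) = B := FreeAlgebra.lift_ι_apply _ _

theorem wordEval_mem_adjoin (w : FreeAlgebra 𝕜 Bool) :
    wordEval A B w ∈ Algebra.adjoin 𝕜 {A, B} := by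
  have hrange : Set.range (Bool.rec A B : Bool → R) = {A, B} := Bool.range_eq _
  rw [← hrange, Algebra.adjoin_range_eq_range_freeAlgebra_lift]
  exact ⟨w, rfl⟩

theorem map_wordEval {S : Type*} [Ring S] [Algebra 𝕜 S] (f : R →ₐ[𝕜] S)
    (w : FreeAlgebra 𝕜 Bool) : f (wordEval A B w) = wordEval (f A) (f B) w := by
  have hcomp : f.comp (wordEval A B) = wordEval (f A) (f B) :=
    FreeAlgebra.hom_ext <| funext fun b => by cases b <;> simp [wordEval]
  exact AlgHom.congr_fun hcomp w

theorem wordEval_op (w : FreeAlgebra 𝕜 Bool) :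
    wordEval (op A) (op B) w = op (wordEval A B (star w)) := by
  induction w using FreeAlgebra.induction with
  | grade0 r => simp [FreeAlgebra.star_algebraMap, MulOpposite.algebraMap_apply]
  | grade1 b => cases b <;> simp [FreeAlgebra.star_ι, wordEval_false, wordEval_true]
  | mul x y hx hy => rw [map_mul, hx, hy, star_mul, map_mul, op_mul]
  | add x y hx hy => rw [map_add, hx, hy, star_add, map_add, op_add]

theorem wordEval_prod_op (w : FreeAlgebra 𝕜 Bool) :
    wordEval (A, op A) (B, op B) w = (wordEval A B w, op (wordEval A B (star w))) :=
  Prod.ext (map_wordEval (AlgHom.fst 𝕜 R Rᵐᵒᵖ) w)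
    ((map_wordEval (AlgHom.snd 𝕜 R Rᵐᵒᵖ) w).trans (wordEval_op w))

namespace QSerrePair

theorem snd_eq_op_fst_of_mem_cornerAlgebra (h : QSerrePair q d A B) (hq : IsGeneric q)
    {z : R × Rᵐᵒᵖ} (hz : z ∈ cornerAlgebra q d (A, MulOpposite.op A) (B, MulOpposite.op B)) :
    z.1 ∈ cornerAlgebra q d A B ∧ z.2 = MulOpposite.op z.1 := by
  induction hz using Algebra.adjoin_induction with
  | mem z hz =>
    obtain ⟨k, rfl⟩ := hz
    have hfst := lowIdem_mul_pow_mul_lowIdem_mem (q := q) (d := d) (A := A) (B := B) k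
    simpa [lowIdem_prod, lowIdem_op, mul_assoc] using hfst
  | algebraMap r => exact ⟨algebraMap_mem _ r, rfl⟩
  | add x y _ _ hx hy => exact ⟨add_mem hx.1 hy.1, by simp [hx.2, hy.2]⟩
  | mul x y _ _ hx hy =>
    refine ⟨mul_mem hx.1 hy.1, ?_⟩
    rw [Prod.snd_mul, Prod.fst_mul, hx.2, hy.2, (h.commute_of_mem_cornerAlgebra hq hx.1 hy.1).eq,
      op_mul]

/-- The pair `(A, op A)`, `(B, op B)` satisfies the same relations as `A`, `B`, so the two
components of `e w e` are given by the same expression in the commuting elements `e B ^ k e`. -/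
theorem lowIdem_mul_wordEval_star_mul_lowIdem (h : QSerrePair q d A B) (hq : IsGeneric q)
    (w : FreeAlgebra 𝕜 Bool) :
    lowIdem q d A * wordEval A B (star w) * lowIdem q d A =
      lowIdem q d A * wordEval A B w * lowIdem q d A := by
  have hmem := (h.prod h.op).lowIdem_mul_mul_lowIdem_mem hq (wordEval_mem_adjoin w)
  have hsnd := congrArg unop (h.snd_eq_op_fst_of_mem_cornerAlgebra hq hmem).2
  simpa [lowIdem_prod, lowIdem_op, wordEval_prod_op, mul_assoc] using hsnd

end QSerrePair

end Palindrome

section Flag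

open Module Finset Polynomial

variable {𝕜 V : Type*} [Field 𝕜] [AddCommGroup V] [Module 𝕜 V] {q : 𝕜} {d m : ℕ} {x y : End 𝕜 V}

/-- The sum of the eigenspaces of `x` for the `m` lowest eigenvalues. Replacing `q` by `q⁻¹`
reverses the order of the eigenvalues, so `eigenFlag q⁻¹ d x` is the opposite flag. -/
def eigenFlag (q : 𝕜) (d : ℕ) (x : End 𝕜 V) (m : ℕ) : Submodule 𝕜 V :=
  ⨆ n ∈ range m, x.eigenspace (qEigenvalue q d n)

theorem eigenspace_le_eigenFlag {n : ℕ} (hn : n < m) :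
    x.eigenspace (qEigenvalue q d n) ≤ eigenFlag q d x m :=
  le_biSup (fun n : ℕ => x.eigenspace (qEigenvalue q d n)) (mem_range.mpr hn)

theorem eigenFlag_mono : Monotone (eigenFlag q d x) := fun _ _ h =>
  iSup₂_le fun _ hn => eigenspace_le_eigenFlag ((mem_range.mp hn).trans_le h)

theorem eigenFlag_one : eigenFlag q d x 1 = x.eigenspace (qEigenvalue q d 0) := by
  simp [eigenFlag]

theorem eigenFlag_succ :
    eigenFlag q d x (m + 1) = x.eigenspace (qEigenvalue q d m) ⊔ eigenFlag q d x m := by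
  rw [eigenFlag, range_add_one, Finset.iSup_insert, eigenFlag]

theorem eigenFlag_eq_ker (hq : IsGeneric q) : eigenFlag q d x m =
    LinearMap.ker (aeval x (Lagrange.nodal (range m) fun n : ℕ => qEigenvalue q d n)) :=
  iSup_eigenspace_eq_ker_aeval_nodal x (qEigenvalue_natCast_injective hq) _

theorem eigenFlag_eq_top (hq : IsGeneric q) (hx : aeval x (spectralPoly q d) = 0) :
    eigenFlag q d x (d + 1) = ⊤ := by
  rw [eigenFlag_eq_ker hq, ← spectralPoly, hx, LinearMap.ker_zero]

theorem nodal_mul_nodal_inv (hm : m ≤ d + 1) :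
    Lagrange.nodal (range m) (fun n : ℕ => qEigenvalue q d n) *
      Lagrange.nodal (range (d + 1 - m)) (fun n : ℕ => qEigenvalue q⁻¹ d n) = spectralPoly q d := by
  have hreflect := prod_Ico_reflect (fun n : ℕ => X - C (qEigenvalue q⁻¹ d n)) m (le_refl (d + 1))
  rw [Nat.sub_self, ← range_eq_Ico] at hreflect
  rw [spectralPoly, Lagrange.nodal, Lagrange.nodal, Lagrange.nodal, ← hreflect,
    ← prod_range_mul_prod_Ico _ hm]
  congr 1
  refine prod_congr rfl fun n hn => ?_
  rw [qEigenvalue_inv, Nat.cast_sub (Nat.lt_succ_iff.mp (mem_Ico.mp hn).2), sub_sub_cancel]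

theorem isCoprime_nodal_nodal_inv (hq : IsGeneric q) (hm : m ≤ d + 1) :
    IsCoprime (Lagrange.nodal (range m) fun n : ℕ => qEigenvalue q d n)
      (Lagrange.nodal (range (d + 1 - m)) fun n : ℕ => qEigenvalue q⁻¹ d n) :=
  IsCoprime.prod_left fun a ha => IsCoprime.prod_right fun b hb =>
    isCoprime_X_sub_C_of_isUnit_sub (sub_ne_zero.mpr fun h => by
      have := qEigenvalue_injective hq (h.trans (qEigenvalue_inv _))
      rw [mem_range] at ha hb
      omega).isUnit

theorem disjoint_eigenFlag (hq : IsGeneric q) (hm : m ≤ d + 1) :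
    Disjoint (eigenFlag q d x m) (eigenFlag q⁻¹ d x (d + 1 - m)) := by
  rw [eigenFlag_eq_ker hq, eigenFlag_eq_ker hq.inv]
  exact disjoint_ker_aeval_of_isCoprime x (isCoprime_nodal_nodal_inv hq hm)

theorem eigenFlag_succ_inf_eigenFlag_inv (hq : IsGeneric q) (hm : m ≤ d) :
    eigenFlag q d x (m + 1) ⊓ eigenFlag q⁻¹ d x (d + 1 - m) =
      x.eigenspace (qEigenvalue q d m) := by
  have hle : x.eigenspace (qEigenvalue q d m) ≤ eigenFlag q⁻¹ d x (d + 1 - m) := by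
    have hm' : qEigenvalue q d m = qEigenvalue q⁻¹ d (d - m : ℕ) := by
      rw [qEigenvalue_inv, Nat.cast_sub hm, sub_sub_cancel]
    rw [hm']
    exact eigenspace_le_eigenFlag (by omega)
  rw [eigenFlag_succ, sup_inf_assoc_of_le _ hle, (disjoint_eigenFlag hq (by omega)).eq_bot,
    sup_bot_eq]

/-- The algebra of the endomorphisms of `V` that map `N` into itself. -/
def stableEnd (N : Submodule 𝕜 V) : Subalgebra 𝕜 (End 𝕜 V) where
  carrier := {f | ∀ v ∈ N, f v ∈ N}
  mul_mem' hf hg v hv := hf _ (hg v hv)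
  add_mem' hf hg v hv := N.add_mem (hf v hv) (hg v hv)
  algebraMap_mem' c _ hv := N.smul_mem c hv

theorem aeval_mem_stableEnd {N : Submodule 𝕜 V} (hN : x ∈ stableEnd N) (p : 𝕜[X]) :
    aeval x p ∈ stableEnd N :=
  Algebra.adjoin_le (Set.singleton_subset_iff.mpr hN) (aeval_mem_adjoin_singleton 𝕜 x)

/-- Projecting along the eigenspaces of `x` is a polynomial in `x`. -/
theorem inf_eigenFlag_sup_inf_eigenFlag_inv (hq : IsGeneric q)
    (hx : aeval x (spectralPoly q d) = 0) {N : Submodule 𝕜 V} (hN : x ∈ stableEnd N)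
    (hm : m ≤ d + 1) :
    N ⊓ eigenFlag q d x m ⊔ N ⊓ eigenFlag q⁻¹ d x (d + 1 - m) = N := by
  refine le_antisymm (sup_le inf_le_left inf_le_left) fun v hv => ?_
  obtain ⟨a, b, hab⟩ := isCoprime_nodal_nodal_inv (d := d) hq hm
  have hmul := nodal_mul_nodal_inv (q := q) hm
  set L := Lagrange.nodal (range m) fun n : ℕ => qEigenvalue q d n
  set H := Lagrange.nodal (range (d + 1 - m)) fun n : ℕ => qEigenvalue q⁻¹ d n
  have hsplit : v = aeval x (b * H) v + aeval x (a * L) v := by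
    rw [← LinearMap.add_apply, ← map_add, add_comm, hab, map_one, End.one_apply]
  rw [hsplit]
  refine Submodule.add_mem_sup ⟨aeval_mem_stableEnd hN _ v hv, ?_⟩
    ⟨aeval_mem_stableEnd hN _ v hv, ?_⟩
  · rw [SetLike.mem_coe, eigenFlag_eq_ker hq, LinearMap.mem_ker, ← End.mul_apply, ← map_mul,
      mul_left_comm, hmul, map_mul, hx, mul_zero, LinearMap.zero_apply]
  · rw [SetLike.mem_coe, eigenFlag_eq_ker hq.inv, LinearMap.mem_ker, ← End.mul_apply, ← map_mul,
      mul_left_comm, mul_comm H, hmul, map_mul, hx, mul_zero, LinearMap.zero_apply]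

section Dimension

variable [FiniteDimensional 𝕜 V] {N : Submodule 𝕜 V}

theorem finrank_inf_eigenFlag_add (hq : IsGeneric q) (hx : aeval x (spectralPoly q d) = 0)
    (hN : x ∈ stableEnd N) (hm : m ≤ d + 1) :
    finrank 𝕜 ↥(N ⊓ eigenFlag q d x m) + finrank 𝕜 ↥(N ⊓ eigenFlag q⁻¹ d x (d + 1 - m)) =
      finrank 𝕜 N := by
  rw [← Submodule.finrank_sup_add_finrank_inf_eq, inf_eigenFlag_sup_inf_eigenFlag_inv hq hx hN hm,
    ((disjoint_eigenFlag hq hm).mono inf_le_right inf_le_right).eq_bot, finrank_bot, add_zero]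

theorem mem_stableEnd_of_finrank_inf_eigenFlag_add (hq : IsGeneric q)
    (hx : aeval x (spectralPoly q d) = 0)
    (hN : ∀ m ≤ d + 1, finrank 𝕜 ↥(N ⊓ eigenFlag q d x m) +
      finrank 𝕜 ↥(N ⊓ eigenFlag q⁻¹ d x (d + 1 - m)) = finrank 𝕜 N) :
    x ∈ stableEnd N := by
  have hsup : ∀ m ≤ d + 1,
      N ⊓ eigenFlag q d x m ⊔ N ⊓ eigenFlag q⁻¹ d x (d + 1 - m) = N := fun m hm => by
    refine Submodule.eq_of_le_of_finrank_eq (sup_le inf_le_left inf_le_left) ?_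
    have hdim := Submodule.finrank_sup_add_finrank_inf_eq (N ⊓ eigenFlag q d x m)
      (N ⊓ eigenFlag q⁻¹ d x (d + 1 - m))
    rwa [((disjoint_eigenFlag hq hm).mono inf_le_right inf_le_right).eq_bot, finrank_bot, add_zero,
      hN m hm] at hdim
  have hflag : ∀ m ≤ d + 1, N ⊓ eigenFlag q d x m ≤ N.comap x := by
    intro m hm
    induction m with
    | zero => simp [eigenFlag]
    | succ m ih =>
      rintro v ⟨hvN, hv⟩
      rw [← hsup m (by omega)] at hvN
      obtain ⟨a, ha, b, hb, rfl⟩ := Submodule.mem_sup.mp hvN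
      have hbflag : b ∈ eigenFlag q d x (m + 1) :=
        ((eigenFlag q d x (m + 1)).add_mem_iff_right (eigenFlag_mono m.le_succ ha.2)).mp hv
      have hbeig : b ∈ x.eigenspace (qEigenvalue q d m) := by
        rw [← eigenFlag_succ_inf_eigenFlag_inv hq (by omega)]
        exact ⟨hbflag, hb.2⟩
      refine (N.comap x).add_mem (ih (by omega) ha) ?_
      rw [Submodule.mem_comap, End.mem_eigenspace_iff.mp hbeig]
      exact N.smul_mem _ hb.1
  intro v hv
  exact hflag (d + 1) le_rfl ⟨hv, by rw [eigenFlag_eq_top hq hx]; trivial⟩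

end Dimension

end Flag

section QWeyl

open Module Finset Polynomial

variable {𝕜 V : Type*} [Field 𝕜] [AddCommGroup V] [Module 𝕜 V] {q : 𝕜} {d : ℕ} {x y : End 𝕜 V}

section Relation

variable {R : Type*} [Ring R] [Algebra 𝕜 R] {a b : R}

/-- The `q`-Weyl relation `(q a b - q⁻¹ b a) / (q - q⁻¹) = 1`, with the denominator cleared. -/
def IsQWeyl (q : 𝕜) (a b : R) : Prop :=
  q • (a * b) - q⁻¹ • (b * a) = (q - q⁻¹) • (1 : R)

namespace IsQWeyl

theorem symm (h : IsQWeyl q a b) : IsQWeyl q⁻¹ b a := by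
  rw [IsQWeyl, inv_inv, ← neg_sub, h, ← neg_smul, neg_sub]

theorem op (h : IsQWeyl q a b) : IsQWeyl q (MulOpposite.op b) (MulOpposite.op a) := by
  simpa only [IsQWeyl, MulOpposite.op_sub, MulOpposite.op_smul, MulOpposite.op_mul,
    MulOpposite.op_one] using congrArg MulOpposite.op h

theorem map {S : Type*} [Ring S] [Algebra 𝕜 S] (h : IsQWeyl q a b) (f : R →ₐ[𝕜] S) :
    IsQWeyl q (f a) (f b) := by
  simpa only [IsQWeyl, map_sub, map_smul, map_mul, map_one] using congrArg f h

theorem mul_eq (h : IsQWeyl q a b) (hq : IsGeneric q) :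
    a * b = q⁻¹ ^ 2 • (b * a) + (1 - q⁻¹ ^ 2) • (1 : R) := by
  have h' := congrArg (q⁻¹ • ·) (sub_eq_iff_eq_add'.mp h)
  simp only [smul_add, smul_smul, mul_sub, inv_mul_cancel₀ hq.ne_zero, one_smul] at h'
  rw [h', sq]

end IsQWeyl

end Relation

namespace IsQWeyl

theorem sub_smul_mem_eigenspace (h : IsQWeyl q x y) (hq : IsGeneric q) {n : ℤ} {v : V}
    (hv : v ∈ x.eigenspace (qEigenvalue q d n)) :
    y v - qEigenvalue q⁻¹ d n • v ∈ x.eigenspace (qEigenvalue q d (n - 1)) := by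
  rw [End.mem_eigenspace_iff] at hv ⊢
  have hxy := LinearMap.congr_fun (h.mul_eq hq) v
  simp only [End.mul_apply, LinearMap.add_apply, LinearMap.smul_apply, End.one_apply, hv,
    map_smul] at hxy
  have hinv := mul_inv_cancel₀ (qEigenvalue_ne_zero (d := d) hq n)
  have hpred : qEigenvalue q d (n - 1) = q⁻¹ ^ 2 * qEigenvalue q d n := by
    rw [sub_eq_add_neg, qEigenvalue_add hq, mul_neg_one, zpow_neg, zpow_ofNat, inv_pow]
  rw [inv_qEigenvalue] at hinv
  rw [map_sub, map_smul, hxy, hv, hpred, smul_sub, smul_smul _ _ v, smul_smul _ _ v, mul_assoc,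
    mul_comm (qEigenvalue q⁻¹ d n), hinv]
  module

end IsQWeyl

theorem eigenspace_qEigenvalue_eq_bot (hq : IsGeneric q) (hx : aeval x (spectralPoly q d) = 0)
    {n : ℤ} (hn : n ∉ Icc (0 : ℤ) d) : x.eigenspace (qEigenvalue q d n) = ⊥ := by
  refine (Submodule.eq_bot_iff _).mpr fun v hv => by_contra fun hv0 => ?_
  have heval := End.aeval_apply_of_hasEigenvector (p := spectralPoly q d)
    (⟨hv, hv0⟩ : x.HasEigenvector (qEigenvalue q d n) v)
  rw [hx, LinearMap.zero_apply] at heval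
  exact (smul_ne_zero (eval_spectralPoly_ne_zero hq hn) hv0) heval.symm

namespace IsQWeyl

theorem eigenspace_le_eigenFlag_inv (h : IsQWeyl q x y) (hq : IsGeneric q)
    (hx : aeval x (spectralPoly q d) = 0) (n : ℕ) :
    x.eigenspace (qEigenvalue q d (n - 1)) ≤ eigenFlag q⁻¹ d y n := by
  induction n with
  | zero =>
    rw [eigenspace_qEigenvalue_eq_bot hq hx (by simp)]
    exact bot_le
  | succ n ih =>
    intro v hv
    rw [Nat.cast_succ, add_sub_cancel_right] at hv
    have hmem := ih (h.sub_smul_mem_eigenspace hq hv)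
    rw [eigenFlag_eq_ker hq.inv, LinearMap.mem_ker] at hmem ⊢
    rw [range_add_one, Lagrange.nodal_insert_eq_nodal notMem_range_self, mul_comm, map_mul,
      End.mul_apply]
    simpa [Algebra.algebraMap_eq_smul_one] using hmem

theorem eigenFlag_le (h : IsQWeyl q x y) (hq : IsGeneric q)
    (hx : aeval x (spectralPoly q d) = 0) (m : ℕ) : eigenFlag q d x m ≤ eigenFlag q⁻¹ d y m :=
  iSup₂_le fun n hn => by
    have hle := h.eigenspace_le_eigenFlag_inv hq hx (n + 1)
    rw [Nat.cast_succ, add_sub_cancel_right] at hle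
    exact hle.trans (eigenFlag_mono (mem_range.mp hn))

theorem eigenFlag_eq (h : IsQWeyl q x y) (hq : IsGeneric q) (hx : aeval x (spectralPoly q d) = 0)
    (hy : aeval y (spectralPoly q d) = 0) (m : ℕ) : eigenFlag q d x m = eigenFlag q⁻¹ d y m := by
  refine le_antisymm (h.eigenFlag_le hq hx m) ?_
  simpa only [inv_inv] using h.symm.eigenFlag_le hq.inv (by rwa [spectralPoly_inv]) m

theorem eigenspace_zero_eq (h : IsQWeyl q x y) (hq : IsGeneric q)
    (hx : aeval x (spectralPoly q d) = 0) (hy : aeval y (spectralPoly q d) = 0) :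
    x.eigenspace (qEigenvalue q d 0) = y.eigenspace (qEigenvalue q⁻¹ d 0) := by
  rw [← eigenFlag_one, ← eigenFlag_one, h.eigenFlag_eq hq hx hy]

end IsQWeyl

end QWeyl

section WeylSystem

open Module Finset Polynomial

variable {𝕜 V V' : Type*} [Field 𝕜] [AddCommGroup V] [Module 𝕜 V] [AddCommGroup V'] [Module 𝕜 V']
  {q : 𝕜} {d : ℕ} {x : TIdx → End 𝕜 V} {y : TIdx → End 𝕜 V'}

/-- Diagonalizable operators of type 1 and diameter `d`, indexed like the generators of `⊠_q`, that
satisfy the `q`-Weyl relations among the defining relations of `⊠_q`. -/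
structure WeylSystem (q : 𝕜) (d : ℕ) (x : TIdx → End 𝕜 V) : Prop where
  aeval_eq_zero : ∀ p, aeval (x p) (spectralPoly q d) = 0
  isQWeyl : ∀ p r : TIdx, p.val.2 = r.val.1 →
    ¬(p.val.2 - p.val.1 = 2 ∧ r.val.2 - r.val.1 = 2) → IsQWeyl q (x p) (x r)

/-- The index of the generator `x_{r,r+1}`, an edge of the square with vertex set `ℤ/4ℤ`. -/
def edge (r : ZMod 4) : TIdx := ⟨(r, r + 1), Or.inl (add_sub_cancel_left r 1)⟩

/-- The index of the generator `x_{r,r+2}`, a diagonal of the square with vertex set `ℤ/4ℤ`. -/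
def diagonal (r : ZMod 4) : TIdx := ⟨(r, r + 2), Or.inr (add_sub_cancel_left r 2)⟩

theorem edge_sub (r : ZMod 4) : (edge r).val.2 - (edge r).val.1 ≠ 2 := by
  revert r
  decide

/-- The flag attached to the vertex `r`: it is induced by every generator `x_{r,j}`, and in the
opposite order by every generator `x_{i,r}`. -/
def vertexFlag (q : 𝕜) (d : ℕ) (x : TIdx → End 𝕜 V) (r : ZMod 4) (m : ℕ) : Submodule 𝕜 V :=
  eigenFlag q⁻¹ d (x (edge r)) m

theorem eigenFlag_le_comap {f : End 𝕜 V} {g : End 𝕜 V'} {σ : V →ₗ[𝕜] V'}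
    (h : σ ∘ₗ f = g ∘ₗ σ) (m : ℕ) : eigenFlag q d f m ≤ (eigenFlag q d g m).comap σ :=
  iSup₂_le fun n hn v hv => eigenspace_le_eigenFlag (mem_range.mp hn) <| by
    rw [End.mem_eigenspace_iff] at hv ⊢
    rw [← LinearMap.comp_apply, ← h, LinearMap.comp_apply, hv, map_smul]

namespace WeylSystem

theorem eigenFlag_eq (h : WeylSystem q d x) (hq : IsGeneric q) (p : TIdx) (m : ℕ) :
    eigenFlag q d (x p) m = vertexFlag q d x p.val.2 m :=
  (h.isQWeyl p (edge p.val.2) rfl fun hne => edge_sub _ hne.2).eigenFlag_eq hq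
    (h.aeval_eq_zero _) (h.aeval_eq_zero _) m

theorem eigenFlag_inv_eq (h : WeylSystem q d x) (hq : IsGeneric q) (p : TIdx) (m : ℕ) :
    eigenFlag q⁻¹ d (x p) m = vertexFlag q d x p.val.1 m := by
  have hedge : (edge (p.val.1 - 1)).val.2 = p.val.1 := sub_add_cancel _ _
  rw [← (h.isQWeyl (edge (p.val.1 - 1)) p hedge fun hne => edge_sub _ hne.1).eigenFlag_eq hq
    (h.aeval_eq_zero _) (h.aeval_eq_zero _), h.eigenFlag_eq hq, hedge]

theorem eigenspace_eq (h : WeylSystem q d x) (hq : IsGeneric q) (p : TIdx) {n : ℕ} (hn : n ≤ d) :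
    (x p).eigenspace (qEigenvalue q d n) =
      vertexFlag q d x p.val.2 (n + 1) ⊓ vertexFlag q d x p.val.1 (d + 1 - n) := by
  rw [← eigenFlag_succ_inf_eigenFlag_inv hq hn, h.eigenFlag_eq hq, h.eigenFlag_inv_eq hq]

theorem vertexFlag_le_comap (hx : WeylSystem q d x) (hy : WeylSystem q d y) (hq : IsGeneric q)
    {σ : V →ₗ[𝕜] V'} (h0 : σ ∘ₗ x (edge 0) = y (edge 0) ∘ₗ σ)
    (h2 : σ ∘ₗ x (edge 2) = y (edge 2) ∘ₗ σ) (r : ZMod 4) (m : ℕ) :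
    vertexFlag q d x r m ≤ (vertexFlag q d y r m).comap σ := by
  have hvertex : ∀ p, σ ∘ₗ x p = y p ∘ₗ σ → r = p.val.1 ∨ r = p.val.2 →
      vertexFlag q d x r m ≤ (vertexFlag q d y r m).comap σ := by
    rintro p hp (rfl | rfl)
    · rw [← hx.eigenFlag_inv_eq hq, ← hy.eigenFlag_inv_eq hq]
      exact eigenFlag_le_comap hp m
    · rw [← hx.eigenFlag_eq hq, ← hy.eigenFlag_eq hq]
      exact eigenFlag_le_comap hp m
  have hcover : ∀ r : ZMod 4, (r = (edge 0).val.1 ∨ r = (edge 0).val.2) ∨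
      (r = (edge 2).val.1 ∨ r = (edge 2).val.2) := by decide
  exact (hcover r).elim (hvertex _ h0) (hvertex _ h2)

/-- The edges `01` and `23` meet all four vertices, and the vertex flags determine the
eigenspaces. -/
theorem comp_eq_comp (hx : WeylSystem q d x) (hy : WeylSystem q d y) (hq : IsGeneric q)
    {σ : V →ₗ[𝕜] V'} (h0 : σ ∘ₗ x (edge 0) = y (edge 0) ∘ₗ σ)
    (h2 : σ ∘ₗ x (edge 2) = y (edge 2) ∘ₗ σ) (p : TIdx) : σ ∘ₗ x p = y p ∘ₗ σ := by
  have htop : (⊤ : Submodule 𝕜 V) ≤ LinearMap.eqLocus (σ ∘ₗ x p) (y p ∘ₗ σ) := by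
    rw [← eigenFlag_eq_top hq (hx.aeval_eq_zero p)]
    refine iSup₂_le fun n hn v hv => ?_
    have hn : n ≤ d := Nat.lt_succ_iff.mp (mem_range.mp hn)
    have hσv : σ v ∈ (y p).eigenspace (qEigenvalue q d n) := by
      rw [hy.eigenspace_eq hq p hn]
      rw [hx.eigenspace_eq hq p hn] at hv
      exact ⟨hx.vertexFlag_le_comap hy hq h0 h2 _ _ hv.1,
        hx.vertexFlag_le_comap hy hq h0 h2 _ _ hv.2⟩
    rw [End.mem_eigenspace_iff] at hv hσv
    rw [LinearMap.mem_eqLocus, LinearMap.comp_apply, LinearMap.comp_apply, hv, hσv, map_smul]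
  exact LinearMap.ext fun v => htop (Submodule.mem_top (x := v))

variable [FiniteDimensional 𝕜 V] {N : Submodule 𝕜 V}

theorem mem_stableEnd_iff (h : WeylSystem q d x) (hq : IsGeneric q) (p : TIdx) :
    x p ∈ stableEnd N ↔ ∀ m ≤ d + 1, finrank 𝕜 ↥(N ⊓ vertexFlag q d x p.val.2 m) +
      finrank 𝕜 ↥(N ⊓ vertexFlag q d x p.val.1 (d + 1 - m)) = finrank 𝕜 N := by
  refine ⟨fun hN m hm => ?_, fun hN => ?_⟩
  · rw [← h.eigenFlag_eq hq, ← h.eigenFlag_inv_eq hq]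
    exact finrank_inf_eigenFlag_add hq (h.aeval_eq_zero p) hN hm
  · refine mem_stableEnd_of_finrank_inf_eigenFlag_add hq (h.aeval_eq_zero p) fun m hm => ?_
    rw [h.eigenFlag_eq hq, h.eigenFlag_inv_eq hq]
    exact hN m hm

/-- The dimension counts for the four given generators force `N` to meet all four vertex flags in
the same dimensions. -/
theorem mem_stableEnd (h : WeylSystem q d x) (hq : IsGeneric q)
    (h01 : x (edge 0) ∈ stableEnd N) (h12 : x (edge 1) ∈ stableEnd N)
    (h23 : x (edge 2) ∈ stableEnd N) (h13 : x (diagonal 1) ∈ stableEnd N) (p : TIdx) :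
    x p ∈ stableEnd N := by
  rw [h.mem_stableEnd_iff hq] at *
  obtain ⟨f, hf⟩ : ∃ f : ZMod 4 → ℕ → ℕ, ∀ r m, finrank 𝕜 ↥(N ⊓ vertexFlag q d x r m) = f r m :=
    ⟨_, fun _ _ => rfl⟩
  simp only [hf] at *
  have hcount : ∀ {i j : ZMod 4}, (∀ m ≤ d + 1, f j m + f i (d + 1 - m) = finrank 𝕜 N) →
      ∀ m ≤ d + 1, f j m + f i (d + 1 - m) = finrank 𝕜 N ∧
        f j (d + 1 - m) + f i m = finrank 𝕜 N := fun hij m hm =>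
    ⟨hij m hm, by simpa only [Nat.sub_sub_self hm] using hij (d + 1 - m) (Nat.sub_le _ _)⟩
  intro m hm
  have c01 := hcount (i := 0) (j := 1) h01 m hm
  have c12 := hcount (i := 1) (j := 2) h12 m hm
  have c23 := hcount (i := 2) (j := 3) h23 m hm
  have c13 := hcount (i := 1) (j := 3) h13 m hm
  have hcases : ∀ r : ZMod 4, r = 0 ∨ r = 1 ∨ r = 2 ∨ r = 3 := by decide
  obtain hi | hi | hi | hi := hcases p.val.1 <;> obtain hj | hj | hj | hj := hcases p.val.2 <;>
    rw [hi, hj] <;> omega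

end WeylSystem

end WeylSystem

section Cyclic

open Module Polynomial

variable {𝕜 V : Type*} [Field 𝕜] [AddCommGroup V] [Module 𝕜 V] {N : Submodule 𝕜 V}
  {f g : End 𝕜 V}

theorem mem_stableEnd_iInf_comap_pow : f ∈ stableEnd (⨅ k, N.comap (f ^ k)) := fun v hv => by
  rw [Submodule.mem_iInf] at hv ⊢
  intro k
  rw [Submodule.mem_comap, ← End.mul_apply, ← pow_succ]
  exact hv (k + 1)

theorem mem_stableEnd_iInf_comap_pow_of_mul_eq (hg : g ∈ stableEnd N) {c : 𝕜} {p : 𝕜[X]}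
    (hfg : f * g = c • (g * f) + aeval f p) : g ∈ stableEnd (⨅ k, N.comap (f ^ k)) := by
  intro v hv
  rw [Submodule.mem_iInf]
  intro k
  induction k generalizing v with
  | zero => exact hg v (Submodule.mem_iInf _ |>.mp hv 0)
  | succ k ih =>
    have hp : aeval f p ∈ stableEnd (⨅ k, N.comap (f ^ k)) :=
      aeval_mem_stableEnd mem_stableEnd_iInf_comap_pow p
    rw [Submodule.mem_comap, pow_succ, End.mul_apply, ← End.mul_apply f, hfg]
    exact (N.comap (f ^ k)).add_mem
      (Submodule.smul_mem _ c (ih (f v) (mem_stableEnd_iInf_comap_pow v hv)))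
      (Submodule.mem_iInf _ |>.mp (hp v hv) k)

/-- The map `w ↦ w(A, B) v`; its range is the cyclic module generated by `v` under `A` and `B`. -/
def cyclicMap (A B : End 𝕜 V) (v : V) : FreeAlgebra 𝕜 Bool →ₗ[𝕜] V :=
  LinearMap.applyₗ v ∘ₗ (wordEval A B).toLinearMap

variable {A B : End 𝕜 V} {v : V}

theorem cyclicMap_apply (w : FreeAlgebra 𝕜 Bool) : cyclicMap A B v w = wordEval A B w v := rfl

theorem cyclicMap_one : cyclicMap A B v 1 = v := by
  rw [cyclicMap_apply, map_one, End.one_apply]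

theorem cyclicMap_mul (w w' : FreeAlgebra 𝕜 Bool) :
    cyclicMap A B v (w * w') = wordEval A B w (cyclicMap A B v w') := by
  rw [cyclicMap_apply, cyclicMap_apply, map_mul, End.mul_apply]

theorem wordEval_mem_stableEnd_range_cyclicMap (w : FreeAlgebra 𝕜 Bool) :
    wordEval A B w ∈ stableEnd (LinearMap.range (cyclicMap A B v)) := by
  rintro _ ⟨w', rfl⟩
  exact ⟨w * w', cyclicMap_mul w w'⟩

theorem range_cyclicMap_le (hv : v ∈ N) (hA : A ∈ stableEnd N) (hB : B ∈ stableEnd N) :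
    LinearMap.range (cyclicMap A B v) ≤ N := by
  rintro _ ⟨w, rfl⟩
  have hle : Algebra.adjoin 𝕜 {A, B} ≤ stableEnd N :=
    Algebra.adjoin_le (Set.insert_subset hA (Set.singleton_subset_iff.mpr hB))
  exact hle (wordEval_mem_adjoin w) v hv

theorem left_mem_stableEnd_range_cyclicMap :
    A ∈ stableEnd (LinearMap.range (cyclicMap A B v)) := by
  simpa only [wordEval_false] using
    wordEval_mem_stableEnd_range_cyclicMap (A := A) (B := B) (v := v) (ι 𝕜 false)

theorem right_mem_stableEnd_range_cyclicMap :
    B ∈ stableEnd (LinearMap.range (cyclicMap A B v)) := by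
  simpa only [wordEval_true] using
    wordEval_mem_stableEnd_range_cyclicMap (A := A) (B := B) (v := v) (ι 𝕜 true)

/-- The largest `f`-stable subspace of the cyclic module contains `v` and is stable under `A` and
`B`, so it is the whole cyclic module. -/
theorem mem_stableEnd_range_cyclicMap {t cA cB : 𝕜} {pA pB : 𝕜[X]} (hv : f.HasEigenvector t v)
    (hA : f * A = cA • (A * f) + aeval f pA) (hB : f * B = cB • (B * f) + aeval f pB) :
    f ∈ stableEnd (LinearMap.range (cyclicMap A B v)) := by
  set N := LinearMap.range (cyclicMap A B v)
  have hvN : v ∈ N := ⟨1, cyclicMap_one⟩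
  have hcore : (⨅ k, N.comap (f ^ k)) = N := by
    refine le_antisymm (iInf_le _ 0) (range_cyclicMap_le ?_
      (mem_stableEnd_iInf_comap_pow_of_mul_eq left_mem_stableEnd_range_cyclicMap hA)
      (mem_stableEnd_iInf_comap_pow_of_mul_eq right_mem_stableEnd_range_cyclicMap hB))
    rw [Submodule.mem_iInf]
    intro k
    rw [Submodule.mem_comap, hv.pow_apply]
    exact N.smul_mem _ hvN
  have hf := mem_stableEnd_iInf_comap_pow (N := N) (f := f)
  rwa [hcore] at hf

end Cyclic

theorem IsQWeyl.mul_eq_of_mul_eq_one {𝕜 R : Type*} [Field 𝕜] [Ring R] [Algebra 𝕜 R] {q : 𝕜}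
    {a b c : R} (h : IsQWeyl q a b) (hq : IsGeneric q) (hbc : b * c = 1) (hcb : c * b = 1) :
    c * a = q⁻¹ ^ 2 • (a * c) + (1 - q⁻¹ ^ 2) • c ^ 2 := by
  calc c * a = c * (a * b) * c := by rw [mul_assoc, mul_assoc a, hbc, mul_one]
    _ = q⁻¹ ^ 2 • (c * b * a * c) + (1 - q⁻¹ ^ 2) • (c * c) := by
        rw [h.mul_eq hq, mul_add, add_mul, mul_smul_comm, smul_mul_assoc, mul_smul_comm, mul_one,
          smul_mul_assoc, ← mul_assoc c]
    _ = _ := by rw [hcb, one_mul, sq c]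

section TetSystem

open Module Polynomial

variable {𝕜 V : Type*} [Field 𝕜] [AddCommGroup V] [Module 𝕜 V] {q : 𝕜} {d : ℕ}
  {x : TIdx → End 𝕜 V}

/-- A family of operators that satisfies all the defining relations of `⊠_q`, each operator being
diagonalizable of type 1 and diameter `d`. -/
structure TetSystem (q : 𝕜) (d : ℕ) (x : TIdx → End 𝕜 V) : Prop extends WeylSystem q d x where
  mul_eq_one : ∀ p r : TIdx, p.val.1 = r.val.2 → p.val.2 = r.val.1 → x p * x r = 1
  isQSerre : ∀ p r : TIdx, p.val.2 - p.val.1 = 1 → r.val.1 - p.val.2 = 1 →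
    r.val.2 - r.val.1 = 1 → IsQSerre q (x p) (x r)

/-- No subspace other than `0` and `V` is stable under all members of the family. Unlike for
irreducible modules, `V = 0` is allowed. -/
def IsIrreducibleFamily {I : Type*} (x : I → End 𝕜 V) : Prop :=
  ∀ W : Submodule 𝕜 V, (∀ p, x p ∈ stableEnd W) → W = ⊥ ∨ W = ⊤

namespace TetSystem

theorem qSerrePair (h : TetSystem q d x) : QSerrePair q d (x (edge 0)) (x (edge 2)) where
  aeval_left := h.aeval_eq_zero _
  aeval_right := h.aeval_eq_zero _
  serre_left := h.isQSerre _ _ (by decide) (by decide) (by decide)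
  serre_right := h.isQSerre _ _ (by decide) (by decide) (by decide)

theorem mem_stableEnd_range_cyclicMap_of_fst_eq_one (h : TetSystem q d x) (hq : IsGeneric q) {v : V}
    (hv : (x (edge 0)).HasEigenvector (qEigenvalue q d 0) v) {p : TIdx} (hp : p.val.1 = 1)
    (hB : ∃ r : 𝕜[X],
      x p * x (edge 2) = q⁻¹ ^ 2 • (x (edge 2) * x p) + aeval (x p) r) :
    x p ∈ stableEnd (LinearMap.range (cyclicMap (x (edge 0)) (x (edge 2)) v)) := by
  obtain ⟨r, hB⟩ := hB
  have hweyl : IsQWeyl q (x (edge 0)) (x p) :=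
    h.isQWeyl _ _ (by rw [hp]; decide) fun hne => edge_sub _ hne.1
  have hA := hweyl.symm.mul_eq hq.inv
  rw [← Algebra.algebraMap_eq_smul_one, ← aeval_C (x p)] at hA
  have hv' : (x p).HasEigenvector (qEigenvalue q⁻¹ d 0) v :=
    ⟨(hweyl.eigenspace_zero_eq hq (h.aeval_eq_zero _) (h.aeval_eq_zero _)).le hv.1, hv.2⟩
  exact mem_stableEnd_range_cyclicMap hv' hA hB

theorem cyclicMap_surjective [FiniteDimensional 𝕜 V] (h : TetSystem q d x) (hq : IsGeneric q)
    (hirr : IsIrreducibleFamily x) {v : V}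
    (hv : (x (edge 0)).HasEigenvector (qEigenvalue q d 0) v) :
    Function.Surjective (cyclicMap (x (edge 0)) (x (edge 2)) v) := by
  have h12 : x (edge 1) * x (edge 2) = q⁻¹ ^ 2 • (x (edge 2) * x (edge 1)) +
      aeval (x (edge 1)) (C (1 - q⁻¹ ^ 2)) := by
    rw [aeval_C, Algebra.algebraMap_eq_smul_one]
    exact (h.isQWeyl _ _ (by decide) fun hne => edge_sub _ hne.1).mul_eq hq
  have h13 : x (diagonal 1) * x (edge 2) = q⁻¹ ^ 2 • (x (edge 2) * x (diagonal 1)) +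
      aeval (x (diagonal 1)) (C (1 - q⁻¹ ^ 2) * X ^ 2) := by
    rw [map_mul, aeval_C, aeval_X_pow, ← Algebra.smul_def]
    have hweyl := h.isQWeyl (edge 2) (diagonal 3) (by decide) fun hne => edge_sub _ hne.1
    exact hweyl.mul_eq_of_mul_eq_one hq (h.mul_eq_one _ _ (by decide) (by decide))
      (h.mul_eq_one _ _ (by decide) (by decide))
  have hstable := h.mem_stableEnd hq left_mem_stableEnd_range_cyclicMap
    (h.mem_stableEnd_range_cyclicMap_of_fst_eq_one hq hv rfl ⟨_, h12⟩)
    right_mem_stableEnd_range_cyclicMap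
    (h.mem_stableEnd_range_cyclicMap_of_fst_eq_one hq hv rfl ⟨_, h13⟩)
  refine LinearMap.range_eq_top.mp ((hirr _ hstable).resolve_left fun hbot => hv.2 ?_)
  rw [← Submodule.mem_bot 𝕜, ← hbot]
  exact ⟨1, cyclicMap_one⟩

end TetSystem

end TetSystem

section Duality

open Module Polynomial

variable {𝕜 V V' : Type*} [Field 𝕜] [AddCommGroup V] [Module 𝕜 V] [AddCommGroup V'] [Module 𝕜 V']
  {q : 𝕜} {d : ℕ}

section DualMap

variable {A B : End 𝕜 V}

/-- Transposition of endomorphisms as a homomorphism from the opposite algebra. -/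
def dualMapHom : (End 𝕜 V)ᵐᵒᵖ →ₐ[𝕜] End 𝕜 (Dual 𝕜 V) :=
  AlgHom.ofLinearMap
    (Dual.transpose ∘ₗ (MulOpposite.opLinearEquiv 𝕜 : End 𝕜 V ≃ₗ[𝕜] _).symm.toLinearMap)
    (LinearMap.ext fun _ => rfl) fun _ _ => LinearMap.ext fun _ => rfl

theorem dualMapHom_op : dualMapHom (MulOpposite.op A) = A.dualMap := rfl

theorem aeval_dualMap (p : 𝕜[X]) : aeval A.dualMap p = (aeval A p).dualMap := by
  rw [← dualMapHom_op, aeval_algHom_apply, aeval_op_apply, dualMapHom_op]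

theorem wordEval_dualMap (w : FreeAlgebra 𝕜 Bool) :
    wordEval A.dualMap B.dualMap w = (wordEval A B (star w)).dualMap := by
  rw [← dualMapHom_op, ← dualMapHom_op, ← map_wordEval, wordEval_op, dualMapHom_op]

theorem IsQWeyl.dualMap (h : IsQWeyl q A B) : IsQWeyl q B.dualMap A.dualMap := by
  simpa only [dualMapHom_op] using h.op.map (S := End 𝕜 (Dual 𝕜 V)) dualMapHom

end DualMap

section CyclicMap

variable {A B : End 𝕜 V} {v : V}

theorem lowIdem_apply (hq : IsGeneric q) (hv : A.HasEigenvector (qEigenvalue q d 0) v) :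
    lowIdem q d A v = v := by
  have hself := Lagrange.eval_basis_self (qEigenvalue_natCast_injective (d := d) hq).injOn
    (Finset.mem_range.mpr d.succ_pos)
  rw [lowIdem, End.aeval_apply_of_hasEigenvector hv, ← Nat.cast_zero, hself, one_smul]

theorem exists_comp_eq_comp_of_ker_cyclicMap_le {A' B' : End 𝕜 V'} {v' : V'}
    (hsurj : Function.Surjective (cyclicMap A B v))
    (hker : LinearMap.ker (cyclicMap A B v) ≤ LinearMap.ker (cyclicMap A' B' v')) :
    ∃ σ : V →ₗ[𝕜] V', σ v = v' ∧ σ ∘ₗ A = A' ∘ₗ σ ∧ σ ∘ₗ B = B' ∘ₗ σ := by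
  obtain ⟨s, hs⟩ := (cyclicMap A B v).exists_rightInverse_of_surjective
    (LinearMap.range_eq_top.mpr hsurj)
  obtain ⟨σ, hσ⟩ : ∃ σ : V →ₗ[𝕜] V', ∀ w, σ (cyclicMap A B v w) = cyclicMap A' B' v' w :=
    ⟨cyclicMap A' B' v' ∘ₗ s, fun w => LinearMap.sub_mem_ker_iff.mp
      (hker (LinearMap.sub_mem_ker_iff.mpr (LinearMap.congr_fun hs _)))⟩
  have hcomp : ∀ b, σ ∘ₗ wordEval A B (ι 𝕜 b) = wordEval A' B' (ι 𝕜 b) ∘ₗ σ := fun b =>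
    LinearMap.ext fun u => by
      obtain ⟨w, rfl⟩ := hsurj u
      rw [LinearMap.comp_apply, LinearMap.comp_apply, ← cyclicMap_mul, hσ, hσ, cyclicMap_mul]
  have hσ1 := hσ 1
  have hfalse := hcomp false
  have htrue := hcomp true
  rw [cyclicMap_one, cyclicMap_one] at hσ1
  rw [wordEval_false, wordEval_false] at hfalse
  rw [wordEval_true, wordEval_true] at htrue
  exact ⟨σ, hσ1, hfalse, htrue⟩

/-- If `w(A, B) v = 0` then, `e` being the idempotent of `A` that fixes `v`, the functional
`u ↦ ε (e w*(A, B) u)` vanishes at every `u = w'(A, B) v`, because `e (w* w') e = e (w'* w) e`. -/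
theorem QSerrePair.ker_cyclicMap_le (h : QSerrePair q d A B) (hq : IsGeneric q)
    (hv : A.HasEigenvector (qEigenvalue q d 0) v) (hsurj : Function.Surjective (cyclicMap A B v))
    (ε : Dual 𝕜 V) : LinearMap.ker (cyclicMap A B v) ≤
      LinearMap.ker (cyclicMap A.dualMap B.dualMap ((lowIdem q d A).dualMap ε)) := by
  intro w hw
  rw [LinearMap.mem_ker, cyclicMap_apply] at hw ⊢
  rw [wordEval_dualMap]
  refine LinearMap.ext fun u => ?_
  obtain ⟨w', rfl⟩ := hsurj u
  have hswap := LinearMap.congr_fun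
    (h.lowIdem_mul_wordEval_star_mul_lowIdem hq (star w' * w)) v
  simp only [star_mul, star_star, map_mul, End.mul_apply, lowIdem_apply hq hv, hw,
    map_zero] at hswap
  rw [LinearMap.dualMap_apply, LinearMap.dualMap_apply, cyclicMap_apply, hswap, map_zero,
    LinearMap.zero_apply]

end CyclicMap

variable {x : TIdx → End 𝕜 V}

namespace IsIrreducibleFamily

variable {I : Type*} {y : I → End 𝕜 V}

theorem comp_surjective {J : Type*} {e : J → I} (h : IsIrreducibleFamily y)
    (he : Function.Surjective e) : IsIrreducibleFamily (y ∘ e) :=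
  fun W hW => h W (he.forall.mpr hW)

theorem injective_of_comp_eq_comp (h : IsIrreducibleFamily y) {y' : I → End 𝕜 V'}
    {σ : V →ₗ[𝕜] V'} (hσ : ∀ p, σ ∘ₗ y p = y' p ∘ₗ σ) (hσ0 : σ ≠ 0) : Function.Injective σ := by
  refine LinearMap.ker_eq_bot.mp ((h _ fun p v hv => ?_).resolve_right fun htop =>
    hσ0 (LinearMap.ker_eq_top.mp htop))
  rw [LinearMap.mem_ker] at hv ⊢
  rw [← LinearMap.comp_apply, hσ, LinearMap.comp_apply, hv, map_zero]

end IsIrreducibleFamily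

/-- The reflection `(i, j) ↦ (1 - j, 1 - i)`. It exchanges the vertices `0`, `1` and the vertices
`2`, `3` of the square, so as a permutation of the generators it fixes `x_{01}` and `x_{23}`. -/
def treflect (p : TIdx) : TIdx :=
  ⟨(1 - p.val.2, 1 - p.val.1), by rw [sub_sub_sub_cancel_left]; exact p.prop⟩

theorem WeylSystem.dual (h : WeylSystem q d x) :
    WeylSystem q d fun p => (x (treflect p)).dualMap where
  aeval_eq_zero p := by
    rw [aeval_dualMap, h.aeval_eq_zero, LinearMap.dualMap_def, map_zero]
  isQWeyl p r hpr hne := by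
    refine (h.isQWeyl (treflect r) (treflect p) ?_ ?_).dualMap
    · exact congrArg (1 - ·) hpr.symm
    · simpa only [treflect, sub_sub_sub_cancel_left, and_comm] using hne

namespace TetSystem

variable [FiniteDimensional 𝕜 V]

theorem exists_dual_equiv (h : TetSystem q d x) (hq : IsGeneric q) (hirr : IsIrreducibleFamily x)
    {v : V} (hv : (x (edge 0)).HasEigenvector (qEigenvalue q d 0) v) :
    ∃ σ : V ≃ₗ[𝕜] Dual 𝕜 V, ∀ p u, σ (x p u) = (x (treflect p)).dualMap (σ u) := by
  obtain ⟨ε, hε⟩ : ∃ ε : Dual 𝕜 V, ε v ≠ 0 := by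
    by_contra! hall
    exact hv.2 ((forall_dual_apply_eq_zero_iff 𝕜 v).mp hall)
  have hsurj := h.cyclicMap_surjective hq hirr hv
  obtain ⟨σ, hσv, h0, h2⟩ := exists_comp_eq_comp_of_ker_cyclicMap_le hsurj
    (h.qSerrePair.ker_cyclicMap_le hq hv hsurj ε)
  have hreflect : treflect (edge 0) = edge 0 ∧ treflect (edge 2) = edge 2 :=
    ⟨Subtype.ext (by decide), Subtype.ext (by decide)⟩
  have hσ := h.comp_eq_comp h.dual hq (by rwa [hreflect.1]) (by rwa [hreflect.2])
  have hσ0 : σ ≠ 0 := by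
    rintro rfl
    refine hε ?_
    rw [← lowIdem_apply hq hv, ← LinearMap.dualMap_apply, ← hσv]
    rfl
  exact ⟨LinearEquiv.ofInjectiveOfFinrankEq σ (hirr.injective_of_comp_eq_comp hσ hσ0)
    Subspace.dual_finrank_eq.symm, fun p => LinearMap.congr_fun (hσ p)⟩

end TetSystem

end Duality

section Twist

open Module

variable {𝕜 V : Type*} [Field 𝕜] [AddCommGroup V] [Module 𝕜 V] {q : 𝕜} {d : ℕ}
  {x : TIdx → End 𝕜 V}

theorem tshift_surjective : Function.Surjective tshift := fun p =>
  ⟨⟨(p.val.1 - 1, p.val.2 - 1), by rw [sub_sub_sub_cancel_right]; exact p.prop⟩,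
    Subtype.ext (Prod.ext (sub_add_cancel _ _) (sub_add_cancel _ _))⟩

theorem tshift_treflect_tshift (p : TIdx) : tshift (treflect (tshift p)) = treflect p := by
  refine Subtype.ext (Prod.ext ?_ ?_) <;> simp only [tshift, treflect] <;> ring

namespace TetSystem

theorem shift (h : TetSystem q d x) : TetSystem q d (x ∘ tshift) where
  aeval_eq_zero p := h.aeval_eq_zero _
  isQWeyl p r hpr hne := h.isQWeyl _ _ (congrArg (· + 1) hpr) (by simpa [tshift] using hne)
  mul_eq_one p r h1 h2 := h.mul_eq_one _ _ (congrArg (· + 1) h1) (congrArg (· + 1) h2)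
  isQSerre p r h1 h2 h3 := h.isQSerre _ _ (by simpa [tshift] using h1) (by simpa [tshift] using h2)
    (by simpa [tshift] using h3)

/-- The double shift comes from comparing the dualities of `x` and of its shift, which are
reindexed by different reflections. -/
theorem exists_equiv_tshift_tshift [FiniteDimensional 𝕜 V] (h : TetSystem q d x)
    (hq : IsGeneric q) (hirr : IsIrreducibleFamily x)
    (heig : ∀ p, (x p).HasEigenvalue (qEigenvalue q d 0)) :
    ∃ σ : V ≃ₗ[𝕜] V, ∀ p v, σ (x p v) = x (tshift (tshift p)) (σ v) := by
  obtain ⟨v, hv⟩ := (heig (edge 0)).exists_hasEigenvector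
  obtain ⟨v', hv'⟩ := (heig (tshift (edge 0))).exists_hasEigenvector
  obtain ⟨σ, hσ⟩ := h.exists_dual_equiv hq hirr hv
  obtain ⟨σ', hσ'⟩ := h.shift.exists_dual_equiv hq (hirr.comp_surjective tshift_surjective) hv'
  refine ⟨σ.trans σ'.symm, fun p u => σ'.injective ?_⟩
  have hshift := hσ' (tshift p) (σ'.symm (σ u))
  rw [Function.comp_apply, Function.comp_apply, tshift_treflect_tshift] at hshift
  rw [LinearEquiv.trans_apply, LinearEquiv.trans_apply, hshift, LinearEquiv.apply_symm_apply,
    LinearEquiv.apply_symm_apply, hσ]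

end TetSystem

end Twist

section Representation

open Module Polynomial Finset

variable {𝕜 V : Type} [Field 𝕜] [AddCommGroup V] [Module 𝕜 V] {q : 𝕜} {d : ℕ} {f : End 𝕜 V}

theorem aeval_spectralPoly_of_eigSet_eq (hf : SemisimpleOn 𝕜 f)
    (heig : EigSet 𝕜 f = {θ : 𝕜 | ∃ n : ℕ, n ≤ d ∧ θ = q ^ ((d : ℤ) - 2 * (n : ℤ))}) :
    aeval f (spectralPoly q d) = 0 := by
  refine LinearMap.ker_eq_top.mp (top_le_iff.mp ?_)
  rw [← hf]
  refine iSup_le fun θ v hv => ?_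
  by_cases hv0 : v = 0
  · rw [hv0]
    exact Submodule.zero_mem _
  have hθ : θ ∈ EigSet 𝕜 f := fun hbot => hv0 ((Submodule.mem_bot 𝕜).mp (hbot ▸ hv))
  rw [heig] at hθ
  obtain ⟨n, hn, rfl⟩ := hθ
  have hroot : q ^ ((d : ℤ) - 2 * n) = qEigenvalue q d (d - n : ℕ) := by
    rw [qEigenvalue]
    congr 1
    omega
  rw [hroot] at hv
  rw [LinearMap.mem_ker, End.aeval_apply_of_hasEigenvector
    (⟨hv, hv0⟩ : f.HasEigenvector (qEigenvalue q d (d - n : ℕ)) v), spectralPoly,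
    Lagrange.eval_nodal_at_node (v := fun n : ℕ => qEigenvalue q d n)
      (mem_range.mpr (by omega : d - n < d + 1)), zero_smul]

theorem hasEigenvalue_of_eigSet_eq
    (heig : EigSet 𝕜 f = {θ : 𝕜 | ∃ n : ℕ, n ≤ d ∧ θ = q ^ ((d : ℤ) - 2 * (n : ℤ))}) :
    f.HasEigenvalue (qEigenvalue q d 0) := by
  have hmem : qEigenvalue q d 0 ∈ EigSet 𝕜 f := by
    rw [heig]
    refine ⟨d, le_rfl, ?_⟩
    rw [qEigenvalue]
    congr 1
    ring
  exact hmem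

theorem tetSystem_of_aeval_eq_zero (π : TetQ 𝕜 q →ₐ[𝕜] End 𝕜 V)
    (hπ : ∀ p, aeval (π (tg 𝕜 q p)) (spectralPoly q d) = 0) :
    TetSystem q d fun p => π (tg 𝕜 q p) where
  aeval_eq_zero := hπ
  isQWeyl p r hpr hne := by
    simpa only [IsQWeyl, tg, map_sub, map_smul, map_mul, map_one] using
      congrArg π (RingQuot.mkAlgHom_rel 𝕜 (TetRel.qrel (q := q) p r hpr hne))
  mul_eq_one := by
    rintro ⟨⟨i, j⟩, hij⟩ ⟨⟨_, _⟩, hr⟩ rfl rfl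
    have hopp : ∀ i j : ZMod 4, j - i = 1 ∨ j - i = 2 → i - j = 1 ∨ i - j = 2 →
        j - i = 2 ∧ i - j = 2 := by decide
    obtain ⟨h, h'⟩ := hopp i j hij hr
    simpa only [tg, map_mul, map_one] using
      congrArg π (RingQuot.mkAlgHom_rel 𝕜 (TetRel.inv (q := q) i j h h'))
  isQSerre := by
    rintro ⟨⟨h, i⟩, hp⟩ ⟨⟨j, k⟩, hr⟩ h1 h2 h3
    simpa only [IsQSerre, tg, map_add, map_smul, map_mul, map_pow] using
      congrArg π (RingQuot.mkAlgHom_rel 𝕜 (TetRel.serre (q := q) h i j k h1 h2 h3))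

theorem isIrreducibleFamily_of_isIrrep {π : TetQ 𝕜 q →ₐ[𝕜] End 𝕜 V} (hπ : IsIrrep 𝕜 π) :
    IsIrreducibleFamily fun p => π (tg 𝕜 q p) := fun W hW => hπ.2 W fun a => by
  obtain ⟨w, rfl⟩ := RingQuot.mkAlgHom_surjective 𝕜 (TetRel 𝕜 q) a
  change π _ ∈ stableEnd W
  induction w using FreeAlgebra.induction with
  | grade0 c =>
    rw [AlgHom.commutes, AlgHom.commutes]
    exact algebraMap_mem _ c
  | grade1 p => exact hW p
  | mul w w' hw hw' =>
    rw [map_mul, map_mul]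
    exact mul_mem hw hw'
  | add w w' hw hw' =>
    rw [map_add, map_add]
    exact add_mem hw hw'

end Representation

theorem stmt19_general (q : F) (hq0 : q ≠ 0)
    (hq1 : ∀ n : ℕ, 0 < n → q ^ n ≠ 1)
    (V : Type) [AddCommGroup V] [Module F V] [FiniteDimensional F V]
    (π : TetQ F q →ₐ[F] Module.End F V) (hirr : IsIrrep F π)
    (hty : ∃ d : ℕ, ∀ p : TIdx, SemisimpleOn F (π (tg F q p)) ∧
      EigSet F (π (tg F q p)) =
        {θ : F | ∃ n : ℕ, n ≤ d ∧ θ = q ^ ((d : ℤ) - 2 * (n : ℤ))}) :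
    ∃ σ : V ≃ₗ[F] V, ∀ (p : TIdx) (v : V),
      σ (π (tg F q p) v) = π (tg F q (tshift (tshift p))) (σ v) := by
  obtain ⟨d, hd⟩ := hty
  have hsystem : TetSystem q d fun p => π (tg F q p) :=
    tetSystem_of_aeval_eq_zero π fun p => aeval_spectralPoly_of_eigSet_eq (hd p).1 (hd p).2
  exact hsystem.exists_equiv_tshift_tshift (isGeneric_of_pow_ne_one hq0 hq1)
    (isIrreducibleFamily_of_isIrrep hirr) fun p => hasEigenvalue_of_eigSet_eq (hd p).2

/-- A finite-dimensional irreducible `⊠_q`-module of type 1 is isomorphic to its twist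
by `ρ²`: there is a linear bijection `σ` with `σ ∘ x_{ij} = x_{i+2,j+2} ∘ σ`. -/
theorem stmt19 [IsAlgClosed F] [CharZero F] (q : F) (hq0 : q ≠ 0)
    (hq1 : ∀ n : ℕ, 0 < n → q ^ n ≠ 1)
    (V : Type) [AddCommGroup V] [Module F V] [FiniteDimensional F V]
    (π : TetQ F q →ₐ[F] Module.End F V) (hirr : IsIrrep F π)
    (hty : ∃ d : ℕ, ∀ p : TIdx, SemisimpleOn F (π (tg F q p)) ∧
      EigSet F (π (tg F q p)) =
        {θ : F | ∃ n : ℕ, n ≤ d ∧ θ = q ^ ((d : ℤ) - 2 * (n : ℤ))}) :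
    ∃ σ : V ≃ₗ[F] V, ∀ (p : TIdx) (v : V),
      σ (π (tg F q p) v) = π (tg F q (tshift (tshift p))) (σ v) :=
  stmt19_general F q hq0 hq1 V π hirr hty
end
end
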